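/- arXiv:2303.07954 — 5 statements merged into one kernel-verified Lean document; each statement's English description precedes it below -/
import Mathlib

section
/- Let Ω be a locally compact Hausdorff topological space with Borel σ-algebra B. Let m and m_n (n ∈ ℕ) be finite nonnegative Borel measures on Ω, with m Radon (inner regular with respect to compact sets). If the sequence (m_n) is uniformly absolutely continuous with respect to m and (m_n) converges vaguely to m, then (m_n) converges weakly to m. -/
open MeasureTheory Filter Topology

/-!
Uniform absolute continuity transports the tightness of `m` to the whole family `(mₙ)`: a compact
set whose complement is `m`-small has a complement that is small for every `mₙ`. Along a tight
family, the integral of a bounded continuous function is approximated, uniformly over the family,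
by the integral of its product with a compactly supported cutoff, and for such products vague
convergence applies.
-/

open Set
open scoped BoundedContinuousFunction CompactlySupported

/-- Uniform absolute continuity of a family of measures `ν` with respect to `μ`: every set of small
`μ`-measure has small `ν i`-measure, uniformly in `i`. As in `MeasureTheory.UnifIntegrable`, the
tolerances are positive reals, embedded in `ℝ≥0∞` by `ENNReal.ofReal`. -/
def UniformlyAbsolutelyContinuous {α ι : Type*} [MeasurableSpace α] (ν : ι → Measure α)
    (μ : Measure α) : Prop :=
  ∀ ε : ℝ, 0 < ε → ∃ δ : ℝ, 0 < δ ∧ ∀ E : Set α, MeasurableSet E →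
    μ E < ENNReal.ofReal δ → ∀ i, ν i E < ENNReal.ofReal ε

theorem UniformlyAbsolutelyContinuous.isTightMeasureSet_range {α ι : Type*} [TopologicalSpace α]
    [MeasurableSpace α] {ν : ι → Measure α} {μ : Measure α}
    (hν : UniformlyAbsolutelyContinuous ν μ) (hμ : IsTightMeasureSet {μ}) :
    IsTightMeasureSet (range ν) := by
  simp only [isTightMeasureSet_iff_exists_isCompact_measure_compl_le, forall_mem_range,
    mem_singleton_iff, forall_eq] at hμ ⊢
  intro ε hε
  obtain ⟨η, -, hη, hηε⟩ := ENNReal.lt_iff_exists_real_btwn.1 hε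
  obtain ⟨δ, hδ, hsmall⟩ := hν η (ENNReal.ofReal_pos.1 hη)
  obtain ⟨r, hr, hrδ⟩ := exists_between (ENNReal.ofReal_pos.2 hδ)
  obtain ⟨K, hK, hμK⟩ := hμ r hr
  refine ⟨K, hK, fun i ↦ ?_⟩
  have hμE : μ (toMeasurable μ Kᶜ) < ENNReal.ofReal δ :=
    (measure_toMeasurable Kᶜ).trans_lt (hμK.trans_lt hrδ)
  calc ν i Kᶜ ≤ ν i (toMeasurable μ Kᶜ) := measure_mono (subset_toMeasurable μ Kᶜ)
    _ ≤ ENNReal.ofReal η := (hsmall _ (measurableSet_toMeasurable μ Kᶜ) hμE i).le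
    _ ≤ ε := hηε.le

theorem norm_integral_sub_integral_le_of_eqOn {α E : Type*} [MeasurableSpace α]
    [NormedAddCommGroup E] [NormedSpace ℝ E] {μ : Measure α} {f g : α → E} {s : Set α} {C : ℝ}
    (hf : Integrable f μ) (hg : Integrable g μ) (hs : μ sᶜ < ⊤) (hfg : EqOn f g s)
    (hC : ∀ x ∈ sᶜ, ‖f x - g x‖ ≤ C) :
    ‖∫ x, f x ∂μ - ∫ x, g x ∂μ‖ ≤ C * μ.real sᶜ := by
  have hzero : ∀ x, x ∉ sᶜ → f x - g x = 0 :=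
    fun x hx ↦ sub_eq_zero.2 (hfg (notMem_compl_iff.1 hx))
  rw [← integral_sub hf hg, ← setIntegral_eq_integral_of_forall_compl_eq_zero hzero]
  exact norm_setIntegral_le_of_norm_le_const hs hC

section LocallyCompact

variable {X : Type*} [TopologicalSpace X] [LocallyCompactSpace X] [R1Space X]

theorem exists_compactlySupported_eqOn_norm_sub_le {E : Type*} [NormedAddCommGroup E]
    [NormedSpace ℝ E] (f : C(X, E)) {K : Set X} (hK : IsCompact K) :
    ∃ g : C_c(X, E), EqOn f g K ∧ ∀ x, ‖f x - g x‖ ≤ ‖f x‖ := by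
  obtain ⟨χ, hχK, hχ_supp, -, hχ⟩ :=
    exists_continuousMap_one_of_isCompact_subset_isOpen hK isOpen_univ (subset_univ K)
  refine ⟨⟨χ • f, HasCompactSupport.smul_right hχ_supp⟩, fun x hx ↦ ?_, fun x ↦ ?_⟩
  · change f x = χ x • f x
    rw [hχK hx, Pi.one_apply, one_smul]
  · have hχ_sub : ‖1 - χ x‖ ≤ 1 := by
      rw [Real.norm_of_nonneg (sub_nonneg.2 (hχ x).2)]
      exact sub_le_self 1 (hχ x).1
    calc ‖f x - χ x • f x‖ = ‖1 - χ x‖ * ‖f x‖ := by rw [← norm_smul, sub_smul, one_smul]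
      _ ≤ ‖f x‖ := mul_le_of_le_one_left (norm_nonneg _) hχ_sub

variable [MeasurableSpace X] [OpensMeasurableSpace X]

theorem exists_compactlySupported_dist_integral_le {S : Set (Measure X)} (hS : IsTightMeasureSet S)
    (f : X →ᵇ ℝ) {ε : ℝ} (hε : 0 < ε) :
    ∃ g : C_c(X, ℝ), ∀ μ ∈ S, IsFiniteMeasure μ → dist (∫ x, f x ∂μ) (∫ x, g x ∂μ) ≤ ε := by
  have hη : 0 < ε / (‖f‖ + 1) := by positivity
  obtain ⟨K, hK, hSK⟩ := isTightMeasureSet_iff_exists_isCompact_measure_compl_le.1 hS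
    (ENNReal.ofReal (ε / (‖f‖ + 1))) (ENNReal.ofReal_pos.2 hη)
  obtain ⟨g, hfg, hg⟩ := exists_compactlySupported_eqOn_norm_sub_le f.toContinuousMap hK
  refine ⟨g, fun μ hμ _ ↦ ?_⟩
  have hg_int : Integrable g μ := g.continuous.integrable_of_hasCompactSupport g.hasCompactSupport
  calc dist (∫ x, f x ∂μ) (∫ x, g x ∂μ) = ‖∫ x, f x ∂μ - ∫ x, g x ∂μ‖ := dist_eq_norm _ _
    _ ≤ ‖f‖ * μ.real Kᶜ := norm_integral_sub_integral_le_of_eqOn (f.integrable μ) hg_int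
        (measure_lt_top μ Kᶜ) hfg fun x _ ↦ (hg x).trans (f.norm_coe_le_norm x)
    _ ≤ (‖f‖ + 1) * (ε / (‖f‖ + 1)) := by
        gcongr
        · exact le_add_of_nonneg_right zero_le_one
        · exact ENNReal.toReal_le_of_le_ofReal hη.le (hSK μ hμ)
    _ = ε := mul_div_cancel₀ ε (by positivity)

variable {ι : Type*} {l : Filter ι} {ν : ι → Measure X} {μ : Measure X}
  [∀ i, IsFiniteMeasure (ν i)] [IsFiniteMeasure μ]

theorem tendsto_integral_boundedContinuous_of_isTightMeasureSet (hν : IsTightMeasureSet (range ν))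
    (hμ : IsTightMeasureSet {μ})
    (hvague : ∀ g : C_c(X, ℝ), Tendsto (fun i ↦ ∫ x, g x ∂ν i) l (𝓝 (∫ x, g x ∂μ)))
    (f : X →ᵇ ℝ) :
    Tendsto (fun i ↦ ∫ x, f x ∂ν i) l (𝓝 (∫ x, f x ∂μ)) := by
  refine Metric.tendsto_nhds.2 fun ε hε ↦ ?_
  obtain ⟨g, hfg⟩ :=
    exists_compactlySupported_dist_integral_le (hμ.union hν) f (by positivity : 0 < ε / 3)
  have hfg_μ := hfg μ (.inl rfl) inferInstance
  filter_upwards [Metric.tendsto_nhds.1 (hvague g) (ε / 3) (by positivity)] with i hg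
  have hfg_ν := hfg (ν i) (.inr (mem_range_self i)) inferInstance
  rw [dist_comm] at hfg_μ
  linarith [dist_triangle4 (∫ x, f x ∂ν i) (∫ x, g x ∂ν i) (∫ x, g x ∂μ) (∫ x, f x ∂μ)]

theorem vague_to_weak_of_unifAC_general (hν : UniformlyAbsolutelyContinuous ν μ)
    (hμ : IsTightMeasureSet {μ})
    (hvague : ∀ g : C_c(X, ℝ), Tendsto (fun i ↦ ∫ x, g x ∂ν i) l (𝓝 (∫ x, g x ∂μ)))
    (f : X →ᵇ ℝ) :
    Tendsto (fun i ↦ ∫ x, f x ∂ν i) l (𝓝 (∫ x, f x ∂μ)) :=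
  tendsto_integral_boundedContinuous_of_isTightMeasureSet (hν.isTightMeasureSet_range hμ) hμ
    hvague f

end LocallyCompact

/-- If `(mₙ)` is a sequence of finite Borel measures on a locally compact Hausdorff space,
uniformly absolutely continuous with respect to a finite Radon measure `m` and vaguely
convergent to `m`, then `(mₙ)` converges weakly to `m`. -/
theorem vague_to_weak_of_unifAC
    {Ω : Type*} [TopologicalSpace Ω] [LocallyCompactSpace Ω] [T2Space Ω]
    [MeasurableSpace Ω] [BorelSpace Ω]
    (m : Measure Ω) (mseq : ℕ → Measure Ω)
    [IsFiniteMeasure m] (hfin : ∀ n, IsFiniteMeasure (mseq n))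
    (hRadon : m.InnerRegular)
    (huac : ∀ ε : ℝ, 0 < ε → ∃ δ : ℝ, 0 < δ ∧ ∀ E : Set Ω, MeasurableSet E →
      m E < ENNReal.ofReal δ → ∀ n, mseq n E < ENNReal.ofReal ε)
    (hvague : ∀ g : Ω → ℝ, Continuous g → Tendsto g (cocompact Ω) (𝓝 0) →
      Tendsto (fun n => ∫ x, g x ∂(mseq n)) atTop (𝓝 (∫ x, g x ∂m))) :
    ∀ g : Ω → ℝ, Continuous g → (∃ C : ℝ, ∀ x, |g x| ≤ C) →
      Tendsto (fun n => ∫ x, g x ∂(mseq n)) atTop (𝓝 (∫ x, g x ∂m)) := fun g hg ⟨C, hC⟩ ↦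
  vague_to_weak_of_unifAC_general huac isTightMeasureSet_singleton_of_innerRegular
    (fun f ↦ hvague f f.continuous f.hasCompactSupport.is_zero_at_infty)
    (.ofNormedAddCommGroup g hg C hC)
end

section
/- Let Ω be a locally compact Hausdorff topological space with Borel σ-algebra B. Let m and m_n (n ∈ ℕ) be finite nonnegative Borel measures on Ω, with m Radon (inner regular with respect to compact sets). Assume m_n ≤ m for every n (i.e., m_n(E) ≤ m(E) for every Borel set E) and that (m_n) converges vaguely to m. Then for every f ∈ L¹(m) and every Borel set A, lim_n ∫_A f dm_n = ∫_A f dm. In particular (m_n) converges setwisely to m, i.e., lim_n m_n(A) = m(A) for every Borel set A. -/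
open MeasureTheory Filter Topology

/-!
Integration against a measure `μ ≤ m` is a 1-Lipschitz functional on `L¹(m)`. The functionals given
by the `mₙ` are therefore equicontinuous, and the `f` along which they converge to integration
against `m` form a closed subset of `L¹(m)`. Continuous functions with compact support belong to
that set by vague convergence, so their `L¹(m)`-limits do; by inner regularity and Urysohn's lemma
these include the indicators of sets of finite measure, which span a dense subspace.
-/

open scoped ENNReal

section Domination

variable {Ω E ι : Type*} [MeasurableSpace Ω] [NormedAddCommGroup E] [NormedSpace ℝ E]
  {m : Measure Ω}

theorem lipschitzWith_integral_of_le {μ : Measure Ω} (hle : μ ≤ m) :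
    LipschitzWith 1 fun f : Ω →₁[m] E ↦ ∫ x, f x ∂μ := by
  intro f g
  have integrable_of_L1 (h : Ω →₁[m] E) : Integrable h μ :=
    (L1.integrable_coeFn h).mono_measure hle
  calc edist (∫ x, f x ∂μ) (∫ x, g x ∂μ)
      = ‖∫ x, (f x - g x) ∂μ‖ₑ := by
        rw [edist_eq_enorm_sub, integral_sub (integrable_of_L1 f) (integrable_of_L1 g)]
    _ ≤ ∫⁻ x, ‖f x - g x‖ₑ ∂μ := enorm_integral_le_lintegral_enorm _
    _ ≤ ∫⁻ x, ‖f x - g x‖ₑ ∂m := lintegral_mono' hle le_rfl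
    _ = (1 : NNReal) * edist f g := by
        simp only [← edist_eq_enorm_sub, ENNReal.coe_one, one_mul, L1.edist_def]

variable {μ : ι → Measure Ω} {l : Filter ι}

theorem isClosed_setOf_tendsto_integral_of_le (hle : ∀ i, μ i ≤ m) :
    IsClosed {f : Ω →₁[m] E | Tendsto (fun i ↦ ∫ x, f x ∂μ i) l (𝓝 (∫ x, f x ∂m))} :=
  (LipschitzWith.uniformEquicontinuous _ 1
    fun i ↦ lipschitzWith_integral_of_le (hle i)).equicontinuous.isClosed_setOfPred_tendsto
    (lipschitzWith_integral_of_le le_rfl).continuous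

theorem tendsto_integral_congr_ae_of_absolutelyContinuous (hac : ∀ i, μ i ≪ m) {f g : Ω → E}
    (hfg : f =ᵐ[m] g) :
    Tendsto (fun i ↦ ∫ x, f x ∂μ i) l (𝓝 (∫ x, f x ∂m)) ↔
      Tendsto (fun i ↦ ∫ x, g x ∂μ i) l (𝓝 (∫ x, g x ∂m)) := by
  simp only [integral_congr_ae hfg, fun i ↦ integral_congr_ae ((hac i).ae_eq hfg)]

theorem tendsto_integral_of_forall_exists_lintegral_edist_lt (hle : ∀ i, μ i ≤ m) {f : Ω → E}
    (hf : Integrable f m)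
    (happrox : ∀ ε : ℝ≥0∞, 0 < ε → ∃ g : Ω → E, Integrable g m ∧
      ∫⁻ x, edist (f x) (g x) ∂m < ε ∧
      Tendsto (fun i ↦ ∫ x, g x ∂μ i) l (𝓝 (∫ x, g x ∂m))) :
    Tendsto (fun i ↦ ∫ x, f x ∂μ i) l (𝓝 (∫ x, f x ∂m)) := by
  have hac (i : ι) : μ i ≪ m := (hle i).absolutelyContinuous
  refine (tendsto_integral_congr_ae_of_absolutelyContinuous hac hf.coeFn_toL1).1 <|
    (isClosed_setOf_tendsto_integral_of_le hle).closure_subset <| EMetric.mem_closure_iff.2 ?_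
  intro ε hε
  obtain ⟨g, hg, hfg, hlim⟩ := happrox ε hε
  exact ⟨hg.toL1 g,
    (tendsto_integral_congr_ae_of_absolutelyContinuous hac hg.coeFn_toL1).2 hlim,
    (Integrable.edist_toL1_toL1 f g hf hg).trans_lt hfg⟩

theorem tendsto_integral_of_tendsto_measureReal [CompleteSpace E] (hle : ∀ i, μ i ≤ m)
    (hset : ∀ s, MeasurableSet s → m s ≠ ∞ →
      Tendsto (fun i ↦ (μ i).real s) l (𝓝 (m.real s)))
    {f : Ω → E} (hf : Integrable f m) :
    Tendsto (fun i ↦ ∫ x, f x ∂μ i) l (𝓝 (∫ x, f x ∂m)) := by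
  have hac (i : ι) : μ i ≪ m := (hle i).absolutelyContinuous
  refine Integrable.induction (fun f ↦ Tendsto (fun i ↦ ∫ x, f x ∂μ i) l (𝓝 (∫ x, f x ∂m)))
    (fun c s hs hms ↦ ?_) (fun f g _ hf hg hlimf hlimg ↦ ?_)
    (isClosed_setOf_tendsto_integral_of_le hle)
    (fun f g hfg _ ↦ (tendsto_integral_congr_ae_of_absolutelyContinuous hac hfg).1) hf
  · simpa only [integral_indicator_const c hs] using (hset s hs hms.ne).smul_const c
  · simp only [Pi.add_apply, integral_add hf hg,
      fun i ↦ integral_add (hf.mono_measure (hle i)) (hg.mono_measure (hle i))]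
    exact hlimf.add hlimg

end Domination

section Vague

variable {Ω : Type*} [TopologicalSpace Ω] [R1Space Ω] [WeaklyLocallyCompactSpace Ω]

theorem exists_hasCompactSupport_edist_indicator_one_le {s K U : Set Ω} (hK : IsCompact K)
    (hU : IsOpen U) (hKs : K ⊆ s) (hKU : K ⊆ U) :
    ∃ g : C(Ω, ℝ), HasCompactSupport g ∧
      ∀ x, edist (s.indicator 1 x) (g x) ≤ (s \ K ∪ U \ K).indicator (1 : Ω → ℝ≥0∞) x := by
  obtain ⟨g, hgK, hgU, hg_supp, hg_mem⟩ := exists_continuous_one_zero_of_isCompact hK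
    hU.isClosed_compl (Set.disjoint_compl_right_iff_subset.2 hKU)
  refine ⟨g, hg_supp, fun x ↦ ?_⟩
  by_cases hx : x ∈ s \ K ∪ U \ K
  · have h_ind : s.indicator (1 : Ω → ℝ) x ∈ Set.Icc (0 : ℝ) 1 :=
      ⟨Set.indicator_nonneg (fun _ _ ↦ zero_le_one) x,
        Set.indicator_le_self' (fun _ _ ↦ zero_le_one) x⟩
    simpa [hx, edist_dist] using Real.dist_le_of_mem_Icc_01 h_ind (hg_mem x)
  · have h_eq : s.indicator (1 : Ω → ℝ) x = g x := by
      by_cases hxK : x ∈ K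
      · simp [hKs hxK, hgK hxK]
      · have hxs : x ∉ s := fun hxs ↦ hx (.inl ⟨hxs, hxK⟩)
        have hxU : x ∉ U := fun hxU ↦ hx (.inr ⟨hxU, hxK⟩)
        simp [hxs, hgU hxU]
    simp [h_eq]

variable [MeasurableSpace Ω] [BorelSpace Ω] {m : Measure Ω} [m.InnerRegularCompactLTTop]
  [IsLocallyFiniteMeasure m]

theorem exists_hasCompactSupport_lintegral_edist_indicator_one_lt {s : Set Ω}
    (hs : MeasurableSet s) (hms : m s ≠ ∞) {ε : ℝ≥0∞} (hε : 0 < ε) :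
    ∃ g : C(Ω, ℝ), HasCompactSupport g ∧ ∫⁻ x, edist (s.indicator 1 x) (g x) ∂m < ε := by
  have hε2 : ε / 2 ≠ 0 := (ENNReal.half_pos hε.ne').ne'
  obtain ⟨K, hKs, hK, hK_closed, hmK⟩ := hs.exists_isCompact_isClosed_sdiff_lt hms hε2
  obtain ⟨U, hKU, hU, hmU⟩ := hK.exists_isOpen_lt_add (μ := m) hε2
  have hmUK : m (U \ K) < ε / 2 := measure_sdiff_lt_of_lt_add hK_closed.nullMeasurableSet hKU
    hK.measure_ne_top hmU
  obtain ⟨g, hg_supp, hg⟩ := exists_hasCompactSupport_edist_indicator_one_le hK hU hKs hKU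
  refine ⟨g, hg_supp, ?_⟩
  calc ∫⁻ x, edist (s.indicator 1 x) (g x) ∂m
      ≤ ∫⁻ x, (s \ K ∪ U \ K).indicator 1 x ∂m := lintegral_mono hg
    _ ≤ m (s \ K ∪ U \ K) := lintegral_indicator_one_le _
    _ ≤ m (s \ K) + m (U \ K) := measure_union_le _ _
    _ < ε / 2 + ε / 2 := ENNReal.add_lt_add hmK hmUK
    _ = ε := ENNReal.add_halves ε

variable {ι : Type*} {μ : ι → Measure Ω} {l : Filter ι}

theorem tendsto_measureReal_of_le_of_vague (hle : ∀ i, μ i ≤ m)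
    (hvague : ∀ g : Ω → ℝ, Continuous g → HasCompactSupport g →
      Tendsto (fun i ↦ ∫ x, g x ∂μ i) l (𝓝 (∫ x, g x ∂m)))
    {s : Set Ω} (hs : MeasurableSet s) (hms : m s ≠ ∞) :
    Tendsto (fun i ↦ (μ i).real s) l (𝓝 (m.real s)) := by
  simp only [← integral_indicator_one hs]
  refine tendsto_integral_of_forall_exists_lintegral_edist_lt hle
    ((integrable_indicator_iff hs).2 (integrableOn_const hms)) fun ε hε ↦ ?_
  obtain ⟨g, hg_supp, hg⟩ := exists_hasCompactSupport_lintegral_edist_indicator_one_lt hs hms hε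
  exact ⟨g, g.continuous.integrable_of_hasCompactSupport hg_supp, hg,
    hvague g g.continuous hg_supp⟩

theorem tendsto_setIntegral_of_le_of_vague_general {E : Type*} [NormedAddCommGroup E]
    [NormedSpace ℝ E] [CompleteSpace E] (hle : ∀ i, μ i ≤ m)
    (hvague : ∀ g : Ω → ℝ, Continuous g → HasCompactSupport g →
      Tendsto (fun i ↦ ∫ x, g x ∂μ i) l (𝓝 (∫ x, g x ∂m))) :
    (∀ f : Ω → E, ∀ A : Set Ω, MeasurableSet A → IntegrableOn f A m →
      Tendsto (fun i ↦ ∫ x in A, f x ∂μ i) l (𝓝 (∫ x in A, f x ∂m))) ∧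
    (∀ A : Set Ω, MeasurableSet A → m A ≠ ∞ → Tendsto (fun i ↦ μ i A) l (𝓝 (m A))) := by
  have hset (A : Set Ω) (hA : MeasurableSet A) (hmA : m A ≠ ∞) :
      Tendsto (fun i ↦ (μ i).real A) l (𝓝 (m.real A)) :=
    tendsto_measureReal_of_le_of_vague hle hvague hA hmA
  refine ⟨fun f A hA hf ↦ ?_, fun A hA hmA ↦ ?_⟩
  · simpa only [integral_indicator hA] using
      tendsto_integral_of_tendsto_measureReal hle hset (hf.integrable_indicator hA)
  · exact (ENNReal.tendsto_toReal_iff (fun i ↦ ne_top_of_le_ne_top hmA (hle i A)) hmA).1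
      (hset A hA hmA)

end Vague

/-- If `(mₙ)` are finite Borel measures on a locally compact Hausdorff space with `mₙ ≤ m`
for a finite Radon measure `m`, and `(mₙ)` converges vaguely to `m`, then for every
`f ∈ L¹(m)` and every Borel set `A`, `∫_A f dmₙ → ∫_A f dm`; in particular `(mₙ)`
converges setwisely to `m`. -/
theorem tendsto_setIntegral_of_le_of_vague
    {Ω : Type*} [TopologicalSpace Ω] [LocallyCompactSpace Ω] [T2Space Ω]
    [MeasurableSpace Ω] [BorelSpace Ω]
    (m : Measure Ω) (mseq : ℕ → Measure Ω)
    [IsFiniteMeasure m] (hfin : ∀ n, IsFiniteMeasure (mseq n))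
    (hRadon : m.InnerRegular)
    (hle : ∀ n, ∀ E : Set Ω, MeasurableSet E → mseq n E ≤ m E)
    (hvague : ∀ g : Ω → ℝ, Continuous g → Tendsto g (cocompact Ω) (𝓝 0) →
      Tendsto (fun n => ∫ x, g x ∂(mseq n)) atTop (𝓝 (∫ x, g x ∂m))) :
    (∀ f : Ω → ℝ, Integrable f m → ∀ A : Set Ω, MeasurableSet A →
      Tendsto (fun n => ∫ x in A, f x ∂(mseq n)) atTop (𝓝 (∫ x in A, f x ∂m))) ∧
    (∀ A : Set Ω, MeasurableSet A → Tendsto (fun n => mseq n A) atTop (𝓝 (m A))) := by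
  have general := tendsto_setIntegral_of_le_of_vague_general (E := ℝ) (Measure.le_iff.2 <| hle ·)
    fun g hg hg_supp ↦ hvague g hg hg_supp.is_zero_at_infty
  exact ⟨fun f hf A hA ↦ general.1 f A hA hf.integrableOn,
    fun A hA ↦ general.2 A hA (measure_ne_top m A)⟩
end

section
/- Let Ω be a locally compact Hausdorff topological space with Borel σ-algebra B. Let m and m_n (n ∈ ℕ) be finite nonnegative Borel measures on Ω, with m Radon. Let f and f_n (n ∈ ℕ) be Borel measurable real-valued functions on Ω. Suppose that: (i) f_n(t) → f(t) for m-almost every t ∈ Ω; (ii) f is continuous; (iii) the sequence (f_n) and the function f have uniformly absolutely continuous (m_n)-integrals on Ω; (iv) (m_n) converges vaguely to m and is uniformly absolutely continuous with respect to m. Then f ∈ L¹(m) and lim_n ∫_A f_n dm_n = ∫_A f dm for every Borel set A. -/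
open MeasureTheory Filter Topology
open scoped ENNReal NNReal

/-!
Everything is compared through sets `s` of small `m`-measure, on which all the integrals
`∫ₛ |fₙ| dmₙ` and `∫ₛ |f| dmₙ` are uniformly small.

* Since `m` is Radon, an indicator `1_A` agrees off such a set with a cutoff `φ` of compact support,
  so `∫_A f dmₙ` is uniformly close to `∫ φ f dmₙ`, which converges because `f` is continuous.
  The same for `m` needs `∫ₛ |f| dm` small: this follows from lower semicontinuity of
  `∫_U |f| dm` on open sets `U` under vague convergence, and also gives `f ∈ L¹(m)`.
* By Egorov and tightness of `m`, `fₙ → f` uniformly on a compact set with complement of small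
  `m`-measure, whose `mₙ`-measures are bounded by vague convergence. Hence `∫ |fₙ - f| dmₙ → 0`.
-/

section Notions

variable {Ω E ι : Type*} [MeasurableSpace Ω] [NormedAddCommGroup E]

/-- The integrals `∫ₛ ‖F i‖ dμᵢ` are absolutely continuous with respect to `m`, uniformly in `i`.
This combines uniformly absolutely continuous `(μᵢ)`-integrals of `F` with uniform absolute
continuity of `(μᵢ)` with respect to `m`. The integrals take values in `ℝ≥0∞`, so that no
integrability of `F i` is presupposed. -/
def UnifAbsContIntegrals (F : ι → Ω → E) (μ : ι → Measure Ω) (m : Measure Ω) : Prop :=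
  ∀ ε : ℝ≥0∞, 0 < ε → ∃ δ : ℝ≥0∞, 0 < δ ∧
    ∀ s, MeasurableSet s → m s < δ → ∀ i, ∫⁻ x in s, ‖F i x‖ₑ ∂μ i < ε

/-- Vague convergence of `μ` to `m` along the filter `l`, tested on compactly supported continuous
functions (fewer than the functions vanishing at infinity). -/
def TendstoVaguely [TopologicalSpace Ω] (μ : ι → Measure Ω) (l : Filter ι) (m : Measure Ω) : Prop :=
  ∀ g : Ω → ℝ, Continuous g → HasCompactSupport g →
    Tendsto (fun i => ∫ x, g x ∂μ i) l (𝓝 (∫ x, g x ∂m))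

end Notions

section Measurable

variable {Ω E ι : Type*} [MeasurableSpace Ω] [NormedAddCommGroup E]

lemma lintegral_enorm_sub_le_of_forall_notMem {μ : Measure Ω} {f g : Ω → E} {s : Set Ω} {η : ℝ≥0∞}
    (hf : AEStronglyMeasurable f μ) (hs : MeasurableSet s) (h : ∀ x ∉ s, ‖f x - g x‖ₑ ≤ η) :
    ∫⁻ x, ‖f x - g x‖ₑ ∂μ ≤ ∫⁻ x in s, ‖f x‖ₑ ∂μ + ∫⁻ x in s, ‖g x‖ₑ ∂μ + η * μ sᶜ := by
  rw [← lintegral_add_compl _ hs, ← lintegral_add_left' hf.enorm.restrict]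
  gcongr
  · exact enorm_sub_le
  · exact (setLIntegral_mono' hs.compl h).trans_eq (setLIntegral_const _ _)

lemma tendsto_setIntegral_of_tendsto_lintegral_enorm_sub [NormedSpace ℝ E] {μ : ι → Measure Ω}
    {F G : ι → Ω → E} {l : Filter ι} {A : Set Ω} {c : E}
    (hF : ∀ᶠ i in l, Integrable (F i) (μ i)) (hG : ∀ i, Integrable (G i) (μ i))
    (hFG : Tendsto (fun i => ∫⁻ x, ‖F i x - G i x‖ₑ ∂μ i) l (𝓝 0))
    (hc : Tendsto (fun i => ∫ x in A, G i x ∂μ i) l (𝓝 c)) :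
    Tendsto (fun i => ∫ x in A, F i x ∂μ i) l (𝓝 c) := by
  rw [tendsto_iff_edist_tendsto_0] at hc ⊢
  refine tendsto_of_tendsto_of_tendsto_of_le_of_le' tendsto_const_nhds
    (by simpa using hFG.add hc) (.of_forall fun _ => zero_le) ?_
  filter_upwards [hF] with i hFi
  refine (edist_triangle _ (∫ x in A, G i x ∂μ i) _).trans (add_le_add_left ?_ _)
  refine (edist_integral_le_lintegral_edist hFi.integrableOn (hG i).integrableOn).trans ?_
  simp only [edist_eq_enorm_sub]
  exact setLIntegral_le_lintegral A _

lemma eventually_integrable_of_tendsto_lintegral_enorm_sub {μ : ι → Measure Ω}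
    {F G : ι → Ω → E} {l : Filter ι} (hF : ∀ i, AEStronglyMeasurable (F i) (μ i))
    (hG : ∀ i, Integrable (G i) (μ i))
    (hFG : Tendsto (fun i => ∫⁻ x, ‖F i x - G i x‖ₑ ∂μ i) l (𝓝 0)) :
    ∀ᶠ i in l, Integrable (F i) (μ i) := by
  filter_upwards [hFG.eventually_lt_const ENNReal.zero_lt_top] with i hi
  have hsub : Integrable (F i - G i) (μ i) := ⟨(hF i).sub (hG i).1, hi⟩
  simpa using hsub.add (hG i)

lemma edist_setIntegral_integral_smul_le [NormedSpace ℝ E] {μ : Measure Ω} {f : Ω → E} {φ : Ω → ℝ}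
    {A s : Set Ω} (hf : Integrable f μ) (hφ : AEStronglyMeasurable φ μ)
    (hφ01 : ∀ x, φ x ∈ Set.Icc 0 1) (hA : MeasurableSet A) (hs : MeasurableSet s)
    (hφA : Set.EqOn φ (A.indicator 1) sᶜ) :
    edist (∫ x in A, f x ∂μ) (∫ x, φ x • f x ∂μ) ≤ ∫⁻ x in s, ‖f x‖ₑ ∂μ := by
  have hφf : Integrable (fun x => φ x • f x) μ :=
    hf.bdd_smul 1 hφ (.of_forall fun x => by
      simpa [abs_of_nonneg (hφ01 x).1] using (hφ01 x).2)
  have hdiff (x : Ω) : edist (A.indicator f x) (φ x • f x) ≤ s.indicator (fun y => ‖f y‖ₑ) x := by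
    have hAf : A.indicator f x = A.indicator (1 : Ω → ℝ) x • f x := by
      by_cases hx : x ∈ A <;> simp [hx]
    by_cases hx : x ∈ s
    · have h01 : A.indicator (1 : Ω → ℝ) x ∈ Set.Icc 0 1 := by
        by_cases hxA : x ∈ A <;> simp [hxA]
      rw [hAf, edist_eq_enorm_sub, ← sub_smul, enorm_smul, ← edist_eq_enorm_sub, edist_dist,
        Set.indicator_of_mem hx]
      exact mul_le_of_le_one_left'
        (ENNReal.ofReal_le_one.2 (Real.dist_le_of_mem_Icc_01 h01 (hφ01 x)))
    · simp [hAf, hφA hx]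
  rw [← integral_indicator hA, ← lintegral_indicator hs]
  exact (edist_integral_le_lintegral_edist (hf.indicator hA) hφf).trans (lintegral_mono hdiff)

end Measurable

section Radon

variable {Ω : Type*} [TopologicalSpace Ω] [R1Space Ω] [MeasurableSpace Ω] [BorelSpace Ω]
  {m : Measure Ω} [IsFiniteMeasure m] [m.InnerRegular]

lemma setLIntegral_le_of_forall_isCompact {g : Ω → ℝ≥0} {s : Set Ω} {c : ℝ≥0∞}
    (hs : MeasurableSet s)
    (h : ∀ K ⊆ s, IsCompact K → IsClosed K → ∫⁻ x in K, g x ∂m ≤ c) :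
    ∫⁻ x in s, g x ∂m ≤ c := by
  by_contra! hlt
  obtain ⟨g', hg'g, hg'fin, hg'c⟩ := exists_lt_lintegral_simpleFunc_of_lt_lintegral hlt
  obtain ⟨δ, hδ, hsmall⟩ :=
    exists_pos_setLIntegral_lt_of_measure_lt hg'fin.ne (tsub_pos_of_lt hg'c).ne'
  obtain ⟨K, hKs, hK, hKc, hmK⟩ :=
    hs.exists_isCompact_isClosed_sdiff_lt (measure_ne_top m s) hδ.ne'
  have hsdiff : ∫⁻ x in s \ K, g' x ∂m < ∫⁻ x in s, g' x ∂m - c := by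
    simpa [Measure.restrict_restrict (hs.diff hKc.measurableSet), Set.inter_eq_left.2
      Set.sdiff_subset] using hsmall (s \ K) ((Measure.restrict_apply_le _ _).trans_lt hmK)
  refine lt_irrefl (∫⁻ x in s, g' x ∂m) ?_
  calc ∫⁻ x in s, g' x ∂m
      = ∫⁻ x in K, g' x ∂m + ∫⁻ x in s \ K, g' x ∂m := by
        rw [← lintegral_inter_add_sdiff _ s hKc.measurableSet, Set.inter_eq_right.2 hKs]
    _ ≤ c + ∫⁻ x in s \ K, g' x ∂m := by
        gcongr
        exact (lintegral_mono fun x => ENNReal.coe_le_coe.2 (hg'g x)).trans (h K hKs hK hKc)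
    _ < c + (∫⁻ x in s, g' x ∂m - c) :=
        ENNReal.add_lt_add_left (hg'c.trans hg'fin).ne hsdiff
    _ = ∫⁻ x in s, g' x ∂m := add_tsub_cancel_of_le hg'c.le

lemma exists_continuous_hasCompactSupport_eqOn_indicator [LocallyCompactSpace Ω] {A : Set Ω}
    (hA : MeasurableSet A) {δ : ℝ≥0∞} (hδ : 0 < δ) :
    ∃ φ : C(Ω, ℝ), HasCompactSupport φ ∧ (∀ x, φ x ∈ Set.Icc 0 1) ∧
      ∃ s, MeasurableSet s ∧ m s < δ ∧ Set.EqOn φ (A.indicator 1) sᶜ := by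
  have hδ2 : δ / 2 ≠ 0 := (ENNReal.half_pos hδ.ne').ne'
  obtain ⟨U, hAU, hU, -, hmU⟩ := hA.exists_isOpen_sdiff_lt (measure_ne_top m A) hδ2
  obtain ⟨K, hKA, hK, hKc, hmK⟩ :=
    hA.exists_isCompact_isClosed_sdiff_lt (measure_ne_top m A) hδ2
  obtain ⟨φ, hφK, hφU, hφc, hφ01⟩ := exists_continuous_one_zero_of_isCompact hK hU.isClosed_compl
    (Set.disjoint_compl_right_iff_subset.2 (hKA.trans hAU))
  refine ⟨φ, hφc, hφ01, U \ A ∪ A \ K,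
    (hU.measurableSet.diff hA).union (hA.diff hKc.measurableSet), ?_, fun x hx => ?_⟩
  · calc m (U \ A ∪ A \ K) ≤ m (U \ A) + m (A \ K) := measure_union_le _ _
      _ < δ / 2 + δ / 2 := ENNReal.add_lt_add hmU hmK
      _ = δ := ENNReal.add_halves δ
  · by_cases hxA : x ∈ A
    · have hxK : x ∈ K := by_contra fun hxK => hx (.inr ⟨hxA, hxK⟩)
      simp [hxA, hφK hxK]
    · have hxU : x ∈ Uᶜ := fun hxU => hx (.inl ⟨hxU, hxA⟩)
      simp [hxA, hφU hxU]

end Radon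

section UnifAbsContIntegrals

variable {Ω E ι : Type*} [TopologicalSpace Ω] [R1Space Ω] [MeasurableSpace Ω] [BorelSpace Ω]
  [NormedAddCommGroup E] {m : Measure Ω} [IsFiniteMeasure m] [m.InnerRegular]

lemma UnifAbsContIntegrals.integrable_of_continuous [SecondCountableTopologyEither Ω E]
    {μ : ι → Measure Ω} {f : Ω → E} (h : UnifAbsContIntegrals (fun _ => f) μ m)
    (hf : Continuous f) (i : ι) [IsFiniteMeasureOnCompacts (μ i)] : Integrable f (μ i) := by
  obtain ⟨δ, hδ, hsmall⟩ := h 1 one_pos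
  obtain ⟨K, -, hK, hKc, hmK⟩ :=
    MeasurableSet.univ.exists_isCompact_isClosed_sdiff_lt (measure_ne_top m _) hδ.ne'
  rw [← Set.compl_eq_univ_sdiff] at hmK
  rw [← integrableOn_univ, ← Set.union_compl_self K]
  refine (hf.continuousOn.integrableOn_compact' hK hKc.measurableSet).union
    ⟨hf.aestronglyMeasurable, ?_⟩
  exact (hsmall _ hKc.measurableSet.compl hmK i).trans ENNReal.one_lt_top

end UnifAbsContIntegrals

section TendstoVaguely

variable {Ω E ι : Type*} [TopologicalSpace Ω] [LocallyCompactSpace Ω] [R1Space Ω]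
  [MeasurableSpace Ω] [BorelSpace Ω] [NormedAddCommGroup E]
  {μ : ι → Measure Ω} {l : Filter ι} {m : Measure Ω}

lemma TendstoVaguely.exists_eventually_measure_le (hμ : TendstoVaguely μ l m)
    [∀ i, IsFiniteMeasureOnCompacts (μ i)] {K : Set Ω} (hK : IsCompact K) :
    ∃ C : ℝ≥0, ∀ᶠ i in l, μ i K ≤ C := by
  obtain ⟨φ, hφK, -, hφc, hφ01⟩ :=
    exists_continuous_one_zero_of_isCompact hK isClosed_empty (Set.disjoint_empty K)
  refine ⟨(∫ x, φ x ∂m + 1).toNNReal, ?_⟩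
  filter_upwards [(hμ φ φ.continuous hφc).eventually_le_const (lt_add_one _)] with i hi
  have hφi : Integrable φ (μ i) := φ.continuous.integrable_of_hasCompactSupport hφc
  calc μ i K ≤ ENNReal.ofReal (∫ x, φ x ∂μ i) :=
        hφi.measure_le_integral (.of_forall fun x => (hφ01 x).1) fun x hx => (hφK hx).ge
    _ ≤ ENNReal.ofReal (∫ x, φ x ∂m + 1) := ENNReal.ofReal_le_ofReal hi

variable [IsFiniteMeasure m]

lemma TendstoVaguely.setLIntegral_enorm_le_liminf_of_isCompact [l.NeBot]
    (hμ : TendstoVaguely μ l m) {f : Ω → E} (hf : Continuous f) {K U : Set Ω} (hK : IsCompact K)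
    (hKm : MeasurableSet K) (hU : IsOpen U) (hKU : K ⊆ U) :
    ∫⁻ x in K, ‖f x‖ₑ ∂m ≤ liminf (fun i => ∫⁻ x in U, ‖f x‖ₑ ∂μ i) l := by
  obtain ⟨φ, hφK, hφU, hφc, hφ01⟩ := exists_continuous_one_zero_of_isCompact hK hU.isClosed_compl
    (Set.disjoint_compl_right_iff_subset.2 hKU)
  have hφf : Continuous fun x => φ x * ‖f x‖ := by fun_prop
  have hφfc : HasCompactSupport fun x => φ x * ‖f x‖ := hφc.mul_right
  have hφf0 (x : Ω) : 0 ≤ φ x * ‖f x‖ := mul_nonneg (hφ01 x).1 (norm_nonneg _)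
  have hlower : ∫⁻ x in K, ‖f x‖ₑ ∂m ≤ ENNReal.ofReal (∫ x, φ x * ‖f x‖ ∂m) := by
    rw [ofReal_integral_eq_lintegral_ofReal (hφf.integrable_of_hasCompactSupport hφfc)
      (.of_forall hφf0), ← lintegral_indicator hKm]
    refine lintegral_mono fun x => ?_
    by_cases hx : x ∈ K
    · simp [hx, hφK hx]
    · simp [hx]
  have hupper (i : ι) :
      ENNReal.ofReal (∫ x, φ x * ‖f x‖ ∂μ i) ≤ ∫⁻ x in U, ‖f x‖ₑ ∂μ i := by
    rw [integral_eq_lintegral_of_nonneg_ae (.of_forall hφf0) hφf.aestronglyMeasurable,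
      ← lintegral_indicator hU.measurableSet]
    refine ENNReal.ofReal_toReal_le.trans (lintegral_mono fun x => ?_)
    by_cases hx : x ∈ U
    · rw [Set.indicator_of_mem hx, ← ofReal_norm]
      exact ENNReal.ofReal_le_ofReal (mul_le_of_le_one_left (norm_nonneg _) (hφ01 x).2)
    · simp [hφU hx]
  refine hlower.trans ?_
  rw [← (ENNReal.tendsto_ofReal (hμ _ hφf hφfc)).liminf_eq]
  exact liminf_le_liminf (.of_forall hupper)

variable [m.InnerRegular]

lemma TendstoVaguely.setLIntegral_enorm_le_liminf_of_isOpen [l.NeBot]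
    (hμ : TendstoVaguely μ l m) {f : Ω → E} (hf : Continuous f) {U : Set Ω} (hU : IsOpen U) :
    ∫⁻ x in U, ‖f x‖ₑ ∂m ≤ liminf (fun i => ∫⁻ x in U, ‖f x‖ₑ ∂μ i) l :=
  setLIntegral_le_of_forall_isCompact hU.measurableSet fun _ hKU hK hKc =>
    hμ.setLIntegral_enorm_le_liminf_of_isCompact hf hK hKc.measurableSet hU hKU

lemma UnifAbsContIntegrals.of_tendstoVaguely [l.NeBot] {f : Ω → E}
    (h : UnifAbsContIntegrals (fun _ => f) μ m) (hμ : TendstoVaguely μ l m) (hf : Continuous f) :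
    UnifAbsContIntegrals (fun _ : Unit => f) (fun _ => m) m := by
  intro ε hε
  obtain ⟨ε', hε', hε'ε⟩ := exists_between hε
  obtain ⟨δ, hδ, hsmall⟩ := h ε' hε'
  refine ⟨δ, hδ, fun s _ hms _ => ?_⟩
  obtain ⟨U, hsU, hU, hmU⟩ := s.exists_isOpen_lt_of_lt δ hms
  calc ∫⁻ x in s, ‖f x‖ₑ ∂m ≤ ∫⁻ x in U, ‖f x‖ₑ ∂m := lintegral_mono_set hsU
    _ ≤ liminf (fun i => ∫⁻ x in U, ‖f x‖ₑ ∂μ i) l :=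
        hμ.setLIntegral_enorm_le_liminf_of_isOpen hf hU
    _ ≤ liminf (fun _ => ε') l :=
        liminf_le_liminf (.of_forall fun i => (hsmall U hU.measurableSet hmU i).le)
    _ = ε' := liminf_const ε'
    _ < ε := hε'ε

lemma TendstoVaguely.tendsto_setIntegral_of_continuous [l.NeBot]
    [∀ i, IsFiniteMeasureOnCompacts (μ i)] {f : Ω → ℝ} (hμ : TendstoVaguely μ l m)
    (hf : Continuous f) (h : UnifAbsContIntegrals (fun _ => f) μ m) {A : Set Ω}
    (hA : MeasurableSet A) :
    Tendsto (fun i => ∫ x in A, f x ∂μ i) l (𝓝 (∫ x in A, f x ∂m)) := by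
  have hm := h.of_tendstoVaguely hμ hf
  rw [EMetric.tendsto_nhds]
  intro ε hε
  have hε3 : 0 < ε / 3 := ENNReal.div_pos hε.ne' (by simp)
  obtain ⟨δ₁, hδ₁, hsmall₁⟩ := h _ hε3
  obtain ⟨δ₂, hδ₂, hsmall₂⟩ := hm _ hε3
  obtain ⟨φ, hφc, hφ01, s, hs, hms, hφA⟩ :=
    exists_continuous_hasCompactSupport_eqOn_indicator (m := m) hA (lt_min hδ₁ hδ₂)
  have hφμ := hμ (fun x => φ x • f x) (by fun_prop) hφc.smul_right
  filter_upwards [EMetric.tendsto_nhds.1 hφμ _ hε3] with i hi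
  have hclose {ν : Measure Ω} (hν : Integrable f ν) :=
    edist_setIntegral_integral_smul_le hν φ.continuous.aestronglyMeasurable hφ01 hA hs hφA
  have hclose_μ := (hclose (h.integrable_of_continuous hf i)).trans_lt
    (hsmall₁ s hs (hms.trans_le (min_le_left _ _)) i)
  have hclose_m := (hclose (hm.integrable_of_continuous hf ())).trans_lt
    (hsmall₂ s hs (hms.trans_le (min_le_right _ _)) ())
  rw [edist_comm] at hclose_m
  calc edist (∫ x in A, f x ∂μ i) (∫ x in A, f x ∂m)
      ≤ edist (∫ x in A, f x ∂μ i) (∫ x, φ x • f x ∂μ i)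
          + edist (∫ x, φ x • f x ∂μ i) (∫ x, φ x • f x ∂m)
          + edist (∫ x, φ x • f x ∂m) (∫ x in A, f x ∂m) := edist_triangle4 _ _ _ _
    _ < ε / 3 + ε / 3 + ε / 3 := ENNReal.add_lt_add (ENNReal.add_lt_add hclose_μ hi) hclose_m
    _ = ε := ENNReal.add_thirds ε

end TendstoVaguely

section Egorov

variable {Ω E ι : Type*} [TopologicalSpace Ω] [R1Space Ω]
  [MeasurableSpace Ω] [BorelSpace Ω] [NormedAddCommGroup E]
  [SemilatticeSup ι] [Nonempty ι] [Countable ι] {μ : ι → Measure Ω} {m : Measure Ω}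
  [IsFiniteMeasure m] [m.InnerRegular] {F : ι → Ω → E} {f : Ω → E}

lemma exists_isCompact_tendstoUniformlyOn_of_ae_tendsto
    (hF : ∀ i, StronglyMeasurable (F i)) (hf : StronglyMeasurable f)
    (hFf : ∀ᵐ x ∂m, Tendsto (fun i => F i x) atTop (𝓝 (f x))) {δ : ℝ≥0∞} (hδ : 0 < δ) :
    ∃ K, IsCompact K ∧ IsClosed K ∧ m Kᶜ < δ ∧ TendstoUniformlyOn F f atTop K := by
  have hδ2 : 0 < δ / 2 := ENNReal.half_pos hδ.ne'
  obtain ⟨r, hr, hrδ⟩ := ENNReal.lt_iff_exists_nnreal_btwn.1 hδ2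
  obtain ⟨t, ht, hmt, hunif⟩ := tendstoUniformlyOn_of_ae_tendsto' hF hf hFf
    (NNReal.coe_pos.2 (ENNReal.coe_pos.1 hr))
  rw [ENNReal.ofReal_coe_nnreal] at hmt
  obtain ⟨K, hKt, hK, hKc, hmK⟩ :=
    ht.compl.exists_isCompact_isClosed_sdiff_lt (measure_ne_top m _) hδ2.ne'
  refine ⟨K, hK, hKc, ?_, hunif.mono hKt⟩
  calc m Kᶜ ≤ m (t ∪ tᶜ \ K) := measure_mono fun x hx => by
        by_cases hxt : x ∈ t
        exacts [.inl hxt, .inr ⟨hxt, hx⟩]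
    _ ≤ m t + m (tᶜ \ K) := measure_union_le _ _
    _ < δ / 2 + δ / 2 := ENNReal.add_lt_add (hmt.trans_lt hrδ) hmK
    _ = δ := ENNReal.add_halves δ

lemma tendsto_lintegral_enorm_sub_of_unifAbsContIntegrals [LocallyCompactSpace Ω]
    [∀ i, IsFiniteMeasureOnCompacts (μ i)] (hμ : TendstoVaguely μ atTop m)
    (hF : ∀ i, StronglyMeasurable (F i)) (hf : StronglyMeasurable f)
    (hFf : ∀ᵐ x ∂m, Tendsto (fun i => F i x) atTop (𝓝 (f x)))
    (hFac : UnifAbsContIntegrals F μ m) (hfac : UnifAbsContIntegrals (fun _ => f) μ m) :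
    Tendsto (fun i => ∫⁻ x, ‖F i x - f x‖ₑ ∂μ i) atTop (𝓝 0) := by
  rw [ENNReal.tendsto_nhds_zero]
  intro ε hε
  have hε3 : 0 < ε / 3 := ENNReal.div_pos hε.ne' (by simp)
  obtain ⟨δ₁, hδ₁, hsmall₁⟩ := hFac _ hε3
  obtain ⟨δ₂, hδ₂, hsmall₂⟩ := hfac _ hε3
  obtain ⟨K, hK, hKc, hmK, hunif⟩ :=
    exists_isCompact_tendstoUniformlyOn_of_ae_tendsto hF hf hFf (lt_min hδ₁ hδ₂)
  obtain ⟨C, hC⟩ := hμ.exists_eventually_measure_le hK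
  obtain ⟨η, hη, hηC⟩ := ENNReal.exists_pos_mul_lt (a := C) ENNReal.coe_ne_top hε3.ne'
  filter_upwards [hC, EMetric.tendstoUniformlyOn_iff.1 hunif η hη] with i hCi hηi
  have hclose (x : Ω) (hx : x ∉ Kᶜ) : ‖F i x - f x‖ₑ ≤ η := by
    rw [← edist_eq_enorm_sub, edist_comm]
    exact (hηi x (Set.notMem_compl_iff.1 hx)).le
  have hKm := hKc.measurableSet.compl
  calc ∫⁻ x, ‖F i x - f x‖ₑ ∂μ i
      ≤ ∫⁻ x in Kᶜ, ‖F i x‖ₑ ∂μ i + ∫⁻ x in Kᶜ, ‖f x‖ₑ ∂μ i + η * μ i Kᶜᶜ :=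
        lintegral_enorm_sub_le_of_forall_notMem (hF i).aestronglyMeasurable hKm hclose
    _ ≤ ε / 3 + ε / 3 + ε / 3 := by
        rw [compl_compl]
        gcongr
        · exact (hsmall₁ _ hKm (hmK.trans_le (min_le_left _ _)) i).le
        · exact (hsmall₂ _ hKm (hmK.trans_le (min_le_right _ _)) i).le
        · exact (mul_le_mul_right hCi η).trans hηC.le
    _ = ε := ENNReal.add_thirds ε

end Egorov

lemma unifAbsContIntegrals_of_setIntegral {Ω E ι : Type*} [MeasurableSpace Ω]
    [NormedAddCommGroup E] {F : ι → Ω → E} {μ : ι → Measure Ω} {m : Measure Ω}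
    (hF : ∀ i, Integrable (F i) (μ i))
    (hFac : ∀ ε : ℝ, 0 < ε → ∃ δ : ℝ, 0 < δ ∧ ∀ i, ∀ A : Set Ω, MeasurableSet A →
      μ i A < ENNReal.ofReal δ → ∫ x in A, ‖F i x‖ ∂μ i < ε)
    (hμ : ∀ ε : ℝ, 0 < ε → ∃ δ : ℝ, 0 < δ ∧ ∀ A : Set Ω, MeasurableSet A →
      m A < ENNReal.ofReal δ → ∀ i, μ i A < ENNReal.ofReal ε) :
    UnifAbsContIntegrals F μ m := by
  intro ε hε
  obtain ⟨r, hr, hrε⟩ := ENNReal.lt_iff_exists_nnreal_btwn.1 hε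
  obtain ⟨δ, hδ, hint⟩ := hFac r (NNReal.coe_pos.2 (ENNReal.coe_pos.1 hr))
  obtain ⟨δ', hδ', hmeasure⟩ := hμ δ hδ
  refine ⟨ENNReal.ofReal δ', ENNReal.ofReal_pos.2 hδ', fun s hs hms i => ?_⟩
  calc ∫⁻ x in s, ‖F i x‖ₑ ∂μ i
      = ENNReal.ofReal (∫ x in s, ‖F i x‖ ∂μ i) :=
        (ofReal_integral_norm_eq_lintegral_enorm (hF i).integrableOn).symm
    _ ≤ r := ENNReal.ofReal_le_of_le_toReal (hint i s hs (hmeasure s hs hms i)).le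
    _ < ε := hrε

theorem tendsto_setIntegral_of_vague_general {Ω ι : Type*} [TopologicalSpace Ω]
    [LocallyCompactSpace Ω] [R1Space Ω] [MeasurableSpace Ω] [BorelSpace Ω]
    [SemilatticeSup ι] [Nonempty ι] [Countable ι] {m : Measure Ω} [IsFiniteMeasure m]
    [m.InnerRegular] {μ : ι → Measure Ω} [∀ i, IsFiniteMeasureOnCompacts (μ i)]
    {f : Ω → ℝ} {F : ι → Ω → ℝ} (hF : ∀ i, Measurable (F i))
    (hFf : ∀ᵐ x ∂m, Tendsto (fun i => F i x) atTop (𝓝 (f x))) (hf : Continuous f)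
    (hFac : UnifAbsContIntegrals F μ m) (hfac : UnifAbsContIntegrals (fun _ => f) μ m)
    (hμ : TendstoVaguely μ atTop m) :
    Integrable f m ∧ (∀ᶠ i in atTop, Integrable (F i) (μ i)) ∧
      ∀ A : Set Ω, MeasurableSet A →
        Tendsto (fun i => ∫ x in A, F i x ∂μ i) atTop (𝓝 (∫ x in A, f x ∂m)) := by
  have hfm : Integrable f m := (hfac.of_tendstoVaguely hμ hf).integrable_of_continuous hf ()
  have hfμ (i : ι) : Integrable f (μ i) := hfac.integrable_of_continuous hf i
  have hL1 : Tendsto (fun i => ∫⁻ x, ‖F i x - f x‖ₑ ∂μ i) atTop (𝓝 0) :=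
    tendsto_lintegral_enorm_sub_of_unifAbsContIntegrals hμ (fun i => (hF i).stronglyMeasurable)
      hf.stronglyMeasurable hFf hFac hfac
  have hFμ : ∀ᶠ i in atTop, Integrable (F i) (μ i) :=
    eventually_integrable_of_tendsto_lintegral_enorm_sub
      (fun i => (hF i).aestronglyMeasurable) hfμ hL1
  exact ⟨hfm, hFμ, fun A hA => tendsto_setIntegral_of_tendsto_lintegral_enorm_sub hFμ hfμ hL1
    (hμ.tendsto_setIntegral_of_continuous hf hfac hA)⟩

/-- Main convergence theorem (Theorem 3.5): if `fₙ → f` `m`-a.e., `f` is continuous,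
`(fₙ)` and `f` have uniformly absolutely continuous `(mₙ)`-integrals, and `(mₙ)` is
vaguely convergent to the finite Radon measure `m` and uniformly absolutely continuous
with respect to `m`, then `f ∈ L¹(m)` and `∫_A fₙ dmₙ → ∫_A f dm` for every Borel set `A`. -/
theorem tendsto_setIntegral_of_vague
    {Ω : Type*} [TopologicalSpace Ω] [LocallyCompactSpace Ω] [T2Space Ω]
    [MeasurableSpace Ω] [BorelSpace Ω]
    (m : Measure Ω) (mseq : ℕ → Measure Ω)
    [IsFiniteMeasure m] (hfin : ∀ n, IsFiniteMeasure (mseq n))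
    (hRadon : m.InnerRegular)
    (f : Ω → ℝ) (fseq : ℕ → Ω → ℝ)
    (hmeas : ∀ n, Measurable (fseq n))
    (hfseqint : ∀ n, Integrable (fseq n) (mseq n))
    (hfint : ∀ n, Integrable f (mseq n))
    -- (i) pointwise a.e. convergence
    (hae : ∀ᵐ t ∂m, Tendsto (fun n => fseq n t) atTop (𝓝 (f t)))
    -- (ii) continuity of the limit
    (hf : Continuous f)
    -- (iii) uniformly absolutely continuous (mₙ)-integrals of (fₙ) and of f
    (huacseq : ∀ ε : ℝ, 0 < ε → ∃ δ : ℝ, 0 < δ ∧ ∀ n, ∀ A : Set Ω, MeasurableSet A →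
      mseq n A < ENNReal.ofReal δ → ∫ x in A, |fseq n x| ∂(mseq n) < ε)
    (huacf : ∀ ε : ℝ, 0 < ε → ∃ δ : ℝ, 0 < δ ∧ ∀ n, ∀ A : Set Ω, MeasurableSet A →
      mseq n A < ENNReal.ofReal δ → ∫ x in A, |f x| ∂(mseq n) < ε)
    -- (iv) vague convergence and uniform absolute continuity of the measures
    (hvague : ∀ g : Ω → ℝ, Continuous g → Tendsto g (cocompact Ω) (𝓝 0) →
      Tendsto (fun n => ∫ x, g x ∂(mseq n)) atTop (𝓝 (∫ x, g x ∂m)))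
    (huac : ∀ ε : ℝ, 0 < ε → ∃ δ : ℝ, 0 < δ ∧ ∀ E : Set Ω, MeasurableSet E →
      m E < ENNReal.ofReal δ → ∀ n, mseq n E < ENNReal.ofReal ε) :
    Integrable f m ∧
      ∀ A : Set Ω, MeasurableSet A →
        Tendsto (fun n => ∫ x in A, fseq n x ∂(mseq n)) atTop (𝓝 (∫ x in A, f x ∂m)) := by
  obtain ⟨hfm, -, hlim⟩ := tendsto_setIntegral_of_vague_general hmeas hae hf
    (unifAbsContIntegrals_of_setIntegral hfseqint huacseq huac)
    (unifAbsContIntegrals_of_setIntegral hfint huacf huac)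
    fun g hg hgc => hvague g hg hgc.is_zero_at_infty
  exact ⟨hfm, hlim⟩
end

section
/- Let Ω be a locally compact Hausdorff topological space with Borel σ-algebra B. Let m and m_n (n ∈ ℕ) be finite nonnegative Borel measures on Ω, with m Radon. If (m_n) converges vaguely to m and is uniformly absolutely continuous with respect to m, then (m_n) converges setwisely to m, i.e., lim_n m_n(A) = m(A) for every Borel set A. -/
open MeasureTheory Filter Topology

/-!
Inner regularity gives a compact `K ⊆ A` and an open `U ⊇ K` such that `E = (A ∪ U) \ K` has small
`m`-measure. A Urysohn function equal to `1` on `K` and to `0` off `U` agrees with the indicator of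
`A` off `E`, so its integral against any measure `ν` is within `ν E` of `ν A`. Uniform absolute
continuity makes this error small for `m` and the `mₙ` alike, and vague convergence compares the
integrals.
-/

open Set
open scoped ENNReal NNReal

theorem tendsto_of_forall_exists_tendsto_le_add {ι : Type*} {l : Filter ι} {u : ι → ℝ≥0∞}
    {a : ℝ≥0∞}
    (h : ∀ ε : ℝ≥0, 0 < ε → ∃ (v : ι → ℝ≥0∞) (b : ℝ≥0∞), Tendsto v l (𝓝 b) ∧
      a ≤ b + ε ∧ b ≤ a + ε ∧ ∀ᶠ i in l, u i ≤ v i + ε ∧ v i ≤ u i + ε) :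
    Tendsto u l (𝓝 a) := by
  have exists_half_gap {x y : ℝ≥0∞} (hxy : x < y) : ∃ ε : ℝ≥0, 0 < ε ∧ x + ε + ε < y := by
    obtain ⟨r, hr, hxr⟩ := ENNReal.lt_iff_exists_add_pos_lt.mp hxy
    refine ⟨r / 2, half_pos hr, ?_⟩
    rwa [add_assoc, ← ENNReal.coe_add, add_halves]
  refine tendsto_order.mpr ⟨fun c hc => ?_, fun c hc => ?_⟩
  · obtain ⟨ε, hε, hcε⟩ := exists_half_gap hc
    obtain ⟨v, b, hv, hab, -, huv⟩ := h ε hε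
    have hcb : c + ε < b := lt_of_add_lt_add_right (hcε.trans_le hab)
    filter_upwards [hv.eventually_const_lt hcb, huv] with i hci hi
    exact lt_of_add_lt_add_right (hci.trans_le hi.2)
  · obtain ⟨ε, hε, hεc⟩ := exists_half_gap hc
    obtain ⟨v, b, hv, -, hba, huv⟩ := h ε hε
    have hbc : b + ε < c := (add_le_add_left hba _).trans_lt hεc
    filter_upwards [(hv.add_const (ε : ℝ≥0∞)).eventually_lt_const hbc, huv] with i hic hi
    exact hi.1.trans_lt hic

section Integral

variable {α : Type*} [MeasurableSpace α] {ν : Measure α} {A E : Set α}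

theorem lintegral_le_lintegral_add_measure {f g : α → ℝ≥0∞} (hE : MeasurableSet E)
    (hf : ∀ x ∈ E, f x ≤ 1) (hfg : ∀ x ∉ E, f x ≤ g x) :
    ∫⁻ x, f x ∂ν ≤ ∫⁻ x, g x ∂ν + ν E :=
  calc
    ∫⁻ x, f x ∂ν ≤ ∫⁻ x, g x + E.indicator 1 x ∂ν := by
      refine lintegral_mono fun x => ?_
      by_cases hx : x ∈ E
      · simpa [hx] using le_add_left (hf x hx)
      · simpa [hx] using hfg x hx
    _ = ∫⁻ x, g x ∂ν + ν E := by
      rw [lintegral_add_right _ (measurable_one.indicator hE), lintegral_indicator_one hE]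

theorem measure_le_lintegral_add_measure_of_eqOn_compl {f : α → ℝ≥0∞} (hA : MeasurableSet A)
    (hE : MeasurableSet E) (hfA : EqOn f (A.indicator 1) Eᶜ) :
    ν A ≤ ∫⁻ x, f x ∂ν + ν E := by
  rw [← lintegral_indicator_one hA]
  exact lintegral_le_lintegral_add_measure hE
    (fun x _ => indicator_le_self' (fun _ _ => zero_le) x) fun x hx => (hfA hx).ge

theorem lintegral_le_measure_add_measure_of_eqOn_compl {f : α → ℝ≥0∞} (hA : MeasurableSet A)
    (hE : MeasurableSet E) (hf : ∀ x ∈ E, f x ≤ 1) (hfA : EqOn f (A.indicator 1) Eᶜ) :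
    ∫⁻ x, f x ∂ν ≤ ν A + ν E := by
  rw [← lintegral_indicator_one hA]
  exact lintegral_le_lintegral_add_measure hE hf fun x hx => (hfA hx).le

end Integral

section Convergence

variable {Ω ι : Type*} [MeasurableSpace Ω] {m : Measure Ω} {μ : ι → Measure Ω} {l : Filter ι}

/-- Uniform absolute continuity with respect to `m` of a family of measures, asymptotically along a
filter: `δ` depends on `ε` only, but the indices from which `μ i E < ε` holds may depend on `E`. -/
def EventuallyUnifAC (μ : ι → Measure Ω) (l : Filter ι) (m : Measure Ω) : Prop :=
  ∀ ε : ℝ, 0 < ε → ∃ δ : ℝ, 0 < δ ∧ ∀ E : Set Ω, MeasurableSet E →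
    m E < ENNReal.ofReal δ → ∀ᶠ i in l, μ i E < ENNReal.ofReal ε

variable [TopologicalSpace Ω]

/-- Vague convergence of a family of measures along a filter. The test functions are the continuous
functions with compact support, so that measures of infinite total mass are allowed. -/
def VaguelyTendsto (μ : ι → Measure Ω) (l : Filter ι) (m : Measure Ω) : Prop :=
  ∀ g : Ω → ℝ, Continuous g → HasCompactSupport g →
    Tendsto (fun i => ∫ x, g x ∂(μ i)) l (𝓝 (∫ x, g x ∂m))

theorem VaguelyTendsto.tendsto_lintegral [OpensMeasurableSpace Ω] [IsFiniteMeasureOnCompacts m]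
    [∀ i, IsFiniteMeasureOnCompacts (μ i)] (h : VaguelyTendsto μ l m) {g : Ω → ℝ}
    (hg : Continuous g) (hgc : HasCompactSupport g) (hg0 : 0 ≤ g) :
    Tendsto (fun i => ∫⁻ x, ENNReal.ofReal (g x) ∂(μ i)) l
      (𝓝 (∫⁻ x, ENNReal.ofReal (g x) ∂m)) := by
  have ofReal_integral (ν : Measure Ω) [IsFiniteMeasureOnCompacts ν] :
      ENNReal.ofReal (∫ x, g x ∂ν) = ∫⁻ x, ENNReal.ofReal (g x) ∂ν :=
    ofReal_integral_eq_lintegral_ofReal (hg.integrable_of_hasCompactSupport hgc)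
      (ae_of_all _ hg0)
  simpa only [ofReal_integral] using ENNReal.tendsto_ofReal (h g hg hgc)

variable [R1Space Ω] [BorelSpace Ω]

theorem exists_isCompact_isOpen_measure_union_sdiff_lt [m.InnerRegularCompactLTTop]
    [IsLocallyFiniteMeasure m] {A : Set Ω} (hA : MeasurableSet A) (hmA : m A ≠ ∞) {ε : ℝ≥0∞}
    (hε : ε ≠ 0) :
    ∃ K U : Set Ω, IsCompact K ∧ IsClosed K ∧ IsOpen U ∧ K ⊆ A ∧ K ⊆ U ∧
      m ((A ∪ U) \ K) < ε := by
  have hε₂ : ε / 2 ≠ 0 := (ENNReal.half_pos hε).ne'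
  obtain ⟨K, hKA, hK, hKcl, hAK⟩ := hA.exists_isCompact_isClosed_sdiff_lt hmA hε₂
  obtain ⟨U, hKU, hU, hmU⟩ := hK.exists_isOpen_lt_add (μ := m) hε₂
  have hUK : m (U \ K) < ε / 2 :=
    measure_sdiff_lt_of_lt_add hKcl.nullMeasurableSet hKU hK.measure_ne_top hmU
  refine ⟨K, U, hK, hKcl, hU, hKA, hKU, ?_⟩
  calc
    m ((A ∪ U) \ K) ≤ m (A \ K) + m (U \ K) := by
      rw [union_sdiff_distrib]
      exact measure_union_le _ _
    _ < ε / 2 + ε / 2 := ENNReal.add_lt_add hAK hUK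
    _ = ε := ENNReal.add_halves ε

variable [LocallyCompactSpace Ω]

theorem exists_hasCompactSupport_eqOn_indicator_compl [m.InnerRegularCompactLTTop]
    [IsLocallyFiniteMeasure m] {A : Set Ω} (hA : MeasurableSet A) (hmA : m A ≠ ∞) {ε : ℝ≥0∞}
    (hε : ε ≠ 0) :
    ∃ (g : C(Ω, ℝ)) (E : Set Ω), HasCompactSupport g ∧ (∀ x, g x ∈ Icc 0 1) ∧
      MeasurableSet E ∧ m E < ε ∧ EqOn g (A.indicator 1) Eᶜ := by
  obtain ⟨K, U, hK, hKcl, hU, hKA, hKU, hE⟩ :=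
    exists_isCompact_isOpen_measure_union_sdiff_lt hA hmA hε
  obtain ⟨g, hgK, hgU, hgc, hg⟩ := exists_continuous_one_zero_of_isCompact hK
    hU.isClosed_compl (disjoint_compl_right_iff_subset.mpr hKU)
  refine ⟨g, (A ∪ U) \ K, hgc, hg, (hA.union hU.measurableSet).diff hKcl.measurableSet, hE,
    fun x hx => ?_⟩
  by_cases hxK : x ∈ K
  · rw [hgK hxK, indicator_of_mem (hKA hxK)]
  · have hxAU : x ∉ A ∪ U := fun h => hx ⟨h, hxK⟩
    rw [hgU fun h => hxAU (.inr h), indicator_of_notMem fun h => hxAU (.inl h), Pi.zero_apply]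

theorem VaguelyTendsto.tendsto_measure_of_ne_top [m.InnerRegularCompactLTTop]
    [IsLocallyFiniteMeasure m] [∀ i, IsLocallyFiniteMeasure (μ i)] (hvague : VaguelyTendsto μ l m)
    (huac : EventuallyUnifAC μ l m) {A : Set Ω} (hA : MeasurableSet A) (hmA : m A ≠ ∞) :
    Tendsto (fun i => μ i A) l (𝓝 (m A)) := by
  refine tendsto_of_forall_exists_tendsto_le_add fun ε hε => ?_
  obtain ⟨δ, hδ, hμE⟩ := huac ε hε
  obtain ⟨g, E, hgc, hg, hE, hmE, hgA⟩ := exists_hasCompactSupport_eqOn_indicator_compl hA hmA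
    (lt_min (ENNReal.ofReal_pos.mpr hδ) (ENNReal.coe_pos.mpr hε)).ne'
  obtain ⟨hmEδ, hmEε⟩ := lt_min_iff.mp hmE
  have hgA' : EqOn (fun x => ENNReal.ofReal (g x)) (A.indicator 1) Eᶜ := fun x hx => by
    by_cases hxA : x ∈ A <;> simp [hgA hx, hxA]
  have measure_le (ν : Measure Ω) (hν : ν E < ε) : ν A ≤ ∫⁻ x, ENNReal.ofReal (g x) ∂ν + ε :=
    (measure_le_lintegral_add_measure_of_eqOn_compl hA hE hgA').trans (by gcongr)
  have le_measure (ν : Measure Ω) (hν : ν E < ε) : ∫⁻ x, ENNReal.ofReal (g x) ∂ν ≤ ν A + ε :=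
    (lintegral_le_measure_add_measure_of_eqOn_compl hA hE
      (fun x _ => ENNReal.ofReal_le_one.mpr (hg x).2) hgA').trans (by gcongr)
  refine ⟨_, _, hvague.tendsto_lintegral g.continuous hgc fun x => (hg x).1,
    measure_le m hmEε, le_measure m hmEε, ?_⟩
  filter_upwards [hμE E hE hmEδ] with i hi
  rw [ENNReal.ofReal_coe_nnreal] at hi
  exact ⟨measure_le _ hi, le_measure _ hi⟩

theorem setwise_of_vague_of_unifAC_general [m.InnerRegular] [IsLocallyFiniteMeasure m]
    [∀ i, IsLocallyFiniteMeasure (μ i)] (hvague : VaguelyTendsto μ l m)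
    (huac : EventuallyUnifAC μ l m) {A : Set Ω} (hA : MeasurableSet A) :
    Tendsto (fun i => μ i A) l (𝓝 (m A)) := by
  rcases ne_or_eq (m A) ∞ with hmA | hmA
  · exact hvague.tendsto_measure_of_ne_top huac hA hmA
  rw [hmA, ENNReal.tendsto_nhds_top_iff_nnreal]
  intro c
  obtain ⟨K, hKA, hK, hcK⟩ := hA.exists_lt_isCompact (hmA ▸ ENNReal.coe_lt_top : (c : ℝ≥0∞) < m A)
  have hμK : Tendsto (fun i => μ i (closure K)) l (𝓝 (m (closure K))) :=
    hvague.tendsto_measure_of_ne_top huac isClosed_closure.measurableSet hK.closure.measure_ne_top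
  filter_upwards [hμK.eventually_const_lt (hcK.trans_le (measure_mono subset_closure))] with i hi
  exact hi.trans_le (measure_mono (hK.closure_subset_measurableSet hA hKA))

end Convergence

/-- If `(mₙ)` is vaguely convergent to the finite Radon measure `m` and uniformly
absolutely continuous with respect to `m`, then `(mₙ)` converges setwisely to `m`. -/
theorem setwise_of_vague_of_unifAC
    {Ω : Type*} [TopologicalSpace Ω] [LocallyCompactSpace Ω] [T2Space Ω]
    [MeasurableSpace Ω] [BorelSpace Ω]
    (m : Measure Ω) (mseq : ℕ → Measure Ω)
    [IsFiniteMeasure m] (hfin : ∀ n, IsFiniteMeasure (mseq n))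
    (hRadon : m.InnerRegular)
    (hvague : ∀ g : Ω → ℝ, Continuous g → Tendsto g (cocompact Ω) (𝓝 0) →
      Tendsto (fun n => ∫ x, g x ∂(mseq n)) atTop (𝓝 (∫ x, g x ∂m)))
    (huac : ∀ ε : ℝ, 0 < ε → ∃ δ : ℝ, 0 < δ ∧ ∀ E : Set Ω, MeasurableSet E →
      m E < ENNReal.ofReal δ → ∀ n, mseq n E < ENNReal.ofReal ε) :
    ∀ A : Set Ω, MeasurableSet A → Tendsto (fun n => mseq n A) atTop (𝓝 (m A)) :=
  fun _ => setwise_of_vague_of_unifAC_general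
    (fun g hg hgc => hvague g hg hgc.is_zero_at_infty) fun ε hε =>
      (huac ε hε).imp fun _ ⟨hδ, hE⟩ => ⟨hδ, fun E hEm hEδ => .of_forall (hE E hEm hEδ)⟩
end

section
/- Let Ω be a locally compact Hausdorff topological space with Borel σ-algebra B. Let m and m_n (n ∈ ℕ) be finite nonnegative Borel measures on Ω, with m Radon. Let f and f_n (n ∈ ℕ) be Borel measurable real-valued functions on Ω such that: (i) f_n → f m-almost everywhere; (ii) f is continuous; (iii) (f_n) and f have uniformly absolutely continuous (m_n)-integrals on Ω; (iv) (m_n) converges vaguely to m and is uniformly absolutely continuous with respect to m. Then the positive and negative parts satisfy lim_n ∫_A f_n⁺ dm_n = ∫_A f⁺ dm and lim_n ∫_A f_n⁻ dm_n = ∫_A f⁻ dm for every Borel set A. -/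
open MeasureTheory Filter Topology

/-!
Vague convergence and uniform absolute continuity force `mₙ(E) → m(E)` for every Borel set `E`:
squeeze `E` between a compact set and an open set with small difference, and interpolate by an
Urysohn function. By Egorov's theorem, `fₙ` is close to `f`, and `f` to a simple function, uniformly
off a set of small `m`-measure, on which the `mₙ`-integrals are uniformly small. This reduces the
convergence to that of integrals of simple functions; Fatou's lemma for setwise convergent measures
carries the bound on the distance from `f` to the simple function over to the limit measure `m`.
-/

open scoped ENNReal

section

variable {Ω E G ι : Type*} [MeasurableSpace Ω] {m : Measure Ω} {ν ρ : ι → Measure Ω}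
  {l : Filter ι}

/-- The measures `ν i` converge to `m` on every measurable set, along the filter `l`. -/
def SetwiseTendsto (ν : ι → Measure Ω) (l : Filter ι) (m : Measure Ω) : Prop :=
  ∀ s, MeasurableSet s → Tendsto (fun i => ν i s) l (𝓝 (m s))

/-- The family of measures `ν` is uniformly absolutely continuous with respect to `m`. Uniform
absolute continuity of the integrals of a family of functions is expressed by taking for `ν i`
measures with densities. -/
def UnifAbsCont (m : Measure Ω) (ν : ι → Measure Ω) : Prop :=
  ∀ ε : ℝ, 0 < ε → ∃ δ : ℝ, 0 < δ ∧ ∀ s, MeasurableSet s → m s < ENNReal.ofReal δ →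
    ∀ i, ν i s < ENNReal.ofReal ε

/-- The functions `F i` have uniformly absolutely continuous `ν i`-integrals. The integral is
Bochner's, with value `0` for a nonintegrable function, so this is meaningful only when every `F i`
is `ν i`-integrable. -/
def HasUnifAbsContIntegrals [NormedAddCommGroup E] (ν : ι → Measure Ω) (F : ι → Ω → E) : Prop :=
  ∀ ε : ℝ, 0 < ε → ∃ δ : ℝ, 0 < δ ∧ ∀ i, ∀ s, MeasurableSet s →
    ν i s < ENNReal.ofReal δ → ∫ x in s, ‖F i x‖ ∂(ν i) < ε

namespace UnifAbsCont

lemma mono (hν : UnifAbsCont m ν) (hρ : ∀ i, ρ i ≤ ν i) : UnifAbsCont m ρ := fun ε hε =>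
  let ⟨δ, hδ, h⟩ := hν ε hε
  ⟨δ, hδ, fun s hs hms i => (hρ i s).trans_lt (h s hs hms i)⟩

lemma add (hν : UnifAbsCont m ν) (hρ : UnifAbsCont m ρ) :
    UnifAbsCont m (fun i => ν i + ρ i) := by
  intro ε hε
  obtain ⟨δ₁, hδ₁, h₁⟩ := hν (ε / 2) (half_pos hε)
  obtain ⟨δ₂, hδ₂, h₂⟩ := hρ (ε / 2) (half_pos hε)
  refine ⟨min δ₁ δ₂, lt_min hδ₁ hδ₂, fun s hs hms i => ?_⟩
  rw [ENNReal.ofReal_min, lt_min_iff] at hms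
  calc (ν i + ρ i) s = ν i s + ρ i s := Measure.add_apply _ _ _
    _ < ENNReal.ofReal (ε / 2) + ENNReal.ofReal (ε / 2) :=
        ENNReal.add_lt_add (h₁ s hs hms.1 i) (h₂ s hs hms.2 i)
    _ = ENNReal.ofReal ε := by
        rw [← ENNReal.ofReal_add (half_pos hε).le (half_pos hε).le, add_halves]

lemma restrict (hν : UnifAbsCont m ν) {A : Set Ω} (hA : MeasurableSet A) :
    UnifAbsCont (m.restrict A) (fun i => (ν i).restrict A) := by
  intro ε hε
  obtain ⟨δ, hδ, h⟩ := hν ε hε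
  refine ⟨δ, hδ, fun s hs hms i => ?_⟩
  rw [Measure.restrict_apply hs] at hms ⊢
  exact h _ (hs.inter hA) hms i

lemma exists_tendstoUniformlyOn_compl {κ : Type*} [SemilatticeSup κ] [Nonempty κ] [Countable κ]
    [PseudoEMetricSpace E] [IsFiniteMeasure m] {g : κ → Ω → E} {f : Ω → E}
    (hρ : UnifAbsCont m ρ) (hg : ∀ k, StronglyMeasurable (g k)) (hf : StronglyMeasurable f)
    (hgf : ∀ᵐ x ∂m, Tendsto (fun k => g k x) atTop (𝓝 (f x))) {ε : ℝ≥0∞} (hε : 0 < ε) :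
    ∃ t, MeasurableSet t ∧ (∀ i, ρ i t ≤ ε) ∧ TendstoUniformlyOn g f atTop tᶜ := by
  obtain ⟨r, -, hr, hrε⟩ := ENNReal.lt_iff_exists_real_btwn.1 hε
  obtain ⟨δ, hδ, h⟩ := hρ r (ENNReal.ofReal_pos.1 hr)
  obtain ⟨t, ht, hmt, hunif⟩ := tendstoUniformlyOn_of_ae_tendsto' hg hf hgf (half_pos hδ)
  have hmt_lt : m t < ENNReal.ofReal δ :=
    hmt.trans_lt (ENNReal.ofReal_lt_ofReal_iff'.2 ⟨half_lt_self hδ, hδ⟩)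
  exact ⟨t, ht, fun i => (h t ht hmt_lt i).le.trans hrε.le, hunif⟩

end UnifAbsCont

lemma HasUnifAbsContIntegrals.unifAbsCont_withDensity [NormedAddCommGroup E] {F : ι → Ω → E}
    (hF : HasUnifAbsContIntegrals ν F) (hν : UnifAbsCont m ν)
    (hint : ∀ i, Integrable (F i) (ν i)) :
    UnifAbsCont m (fun i => (ν i).withDensity (‖F i ·‖ₑ)) := by
  intro ε hε
  obtain ⟨δ, hδ, h⟩ := hF ε hε
  obtain ⟨δ', hδ', h'⟩ := hν δ hδ
  refine ⟨δ', hδ', fun s hs hms i => ?_⟩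
  rw [withDensity_apply _ hs, ← ofReal_integral_norm_eq_lintegral_enorm (hint i).integrableOn]
  exact ENNReal.ofReal_lt_ofReal_iff'.2 ⟨h i s hs (h' s hs hms i), hε⟩

lemma lintegral_le_mul_add_setLIntegral {μ : Measure Ω} {g : Ω → ℝ≥0∞} {c : ℝ≥0∞} {t : Set Ω}
    (ht : MeasurableSet t) (hg : ∀ x ∈ tᶜ, g x ≤ c) :
    ∫⁻ x, g x ∂μ ≤ c * μ Set.univ + ∫⁻ x in t, g x ∂μ := by
  have hcompl : ∫⁻ x in tᶜ, g x ∂μ ≤ c * μ Set.univ :=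
    calc ∫⁻ x in tᶜ, g x ∂μ ≤ ∫⁻ _ in tᶜ, c ∂μ := setLIntegral_mono' ht.compl hg
      _ = c * μ tᶜ := setLIntegral_const _ _
      _ ≤ c * μ Set.univ := by gcongr; exact Set.subset_univ _
  rw [← lintegral_add_compl g ht, add_comm]
  gcongr

namespace SetwiseTendsto

lemma restrict (hν : SetwiseTendsto ν l m) {A : Set Ω} (hA : MeasurableSet A) :
    SetwiseTendsto (fun i => (ν i).restrict A) l (m.restrict A) := by
  intro s hs
  simp only [Measure.restrict_apply hs]
  exact hν _ (hs.inter hA)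

lemma exists_eventually_mul_measure_univ_le [IsFiniteMeasure m] (hν : SetwiseTendsto ν l m)
    {ε : ℝ≥0∞} (hε : 0 < ε) : ∃ c > 0, ∀ᶠ i in l, c * ν i Set.univ ≤ ε := by
  have hm : m Set.univ + 1 ≠ ∞ := by finiteness
  have hlt : m Set.univ < m Set.univ + 1 :=
    ENNReal.lt_add_right (measure_ne_top _ _) one_ne_zero
  refine ⟨ε / (m Set.univ + 1), ENNReal.div_pos hε.ne' hm, ?_⟩
  filter_upwards [(hν _ .univ).eventually_le_const hlt] with i hi
  calc ε / (m Set.univ + 1) * ν i Set.univ ≤ ε / (m Set.univ + 1) * (m Set.univ + 1) := by gcongr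
    _ = ε := ENNReal.div_mul_cancel (by positivity) hm

lemma lintegral_le_liminf (hν : SetwiseTendsto ν l m) (g : Ω → ℝ≥0∞) :
    ∫⁻ x, g x ∂m ≤ liminf (fun i => ∫⁻ x, g x ∂(ν i)) l := by
  rcases l.eq_or_neBot with rfl | _
  · simp
  rw [lintegral_eq_nnreal]
  refine iSup₂_le fun φ hφ => ?_
  have hlim : Tendsto (fun i => (φ.map (↑)).lintegral (ν i)) l
      (𝓝 ((φ.map (↑) : SimpleFunc Ω ℝ≥0∞).lintegral m)) := by
    simp only [SimpleFunc.map_lintegral]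
    exact tendsto_finsetSum _ fun c _ =>
      ENNReal.Tendsto.const_mul (hν _ (φ.measurableSet_fiber c)) (.inr ENNReal.coe_ne_top)
  rw [← hlim.liminf_eq]
  refine liminf_le_liminf (Eventually.of_forall fun i => ?_)
  rw [← SimpleFunc.lintegral_eq_lintegral]
  exact lintegral_mono hφ

variable [NormedAddCommGroup E]

lemma tendsto_integral_simpleFunc [NormedSpace ℝ E] [CompleteSpace E] [IsFiniteMeasure m]
    [∀ i, IsFiniteMeasure (ν i)] (hν : SetwiseTendsto ν l m) (φ : SimpleFunc Ω E) :
    Tendsto (fun i => ∫ x, φ x ∂(ν i)) l (𝓝 (∫ x, φ x ∂m)) := by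
  simp only [← SimpleFunc.integral_eq_integral φ φ.integrable_of_isFiniteMeasure,
    SimpleFunc.integral_eq]
  exact tendsto_finsetSum _ fun y _ => Tendsto.smul_const
    ((ENNReal.tendsto_toReal (measure_ne_top _ _)).comp (hν _ (φ.measurableSet_fiber y))) y

lemma exists_simpleFunc_lintegral_edist_le [l.NeBot] [IsFiniteMeasure m]
    (hν : SetwiseTendsto ν l m) {f : Ω → E} (hf : StronglyMeasurable f)
    (hfuac : UnifAbsCont m fun i => (ν i).withDensity (‖f ·‖ₑ)) {ε : ℝ≥0∞} (hε : 0 < ε) :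
    ∃ φ : SimpleFunc Ω E, (∀ᶠ i in l, ∫⁻ x, edist (f x) (φ x) ∂(ν i) ≤ ε) ∧
      ∫⁻ x, edist (f x) (φ x) ∂m ≤ ε := by
  obtain ⟨c, hc, hcν⟩ := hν.exists_eventually_mul_measure_univ_le (ENNReal.half_pos hε.ne')
  obtain ⟨t, ht, hft, hunif⟩ := hfuac.exists_tendstoUniformlyOn_compl
    (fun k => (hf.approx k).stronglyMeasurable) hf (ae_of_all _ hf.tendsto_approx)
    (ENNReal.half_pos hε.ne')
  obtain ⟨k, hk⟩ := (EMetric.tendstoUniformlyOn_iff.1 hunif c hc).exists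
  set φ := (hf.approx k).restrict tᶜ
  have hoff : ∀ x ∈ tᶜ, edist (f x) (φ x) ≤ c := fun x hx => by
    rw [SimpleFunc.restrict_apply _ ht.compl, Set.indicator_of_mem hx]
    exact (hk x hx).le
  have hon : ∀ x ∈ t, edist (f x) (φ x) = ‖f x‖ₑ := fun x hx => by
    rw [SimpleFunc.restrict_apply _ ht.compl, Set.indicator_of_notMem (not_not_intro hx),
      edist_zero_right]
  have hφ : ∀ᶠ i in l, ∫⁻ x, edist (f x) (φ x) ∂(ν i) ≤ ε := by
    filter_upwards [hcν] with i hi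
    calc ∫⁻ x, edist (f x) (φ x) ∂(ν i)
        ≤ c * ν i Set.univ + ∫⁻ x in t, edist (f x) (φ x) ∂(ν i) :=
          lintegral_le_mul_add_setLIntegral ht hoff
      _ = c * ν i Set.univ + (ν i).withDensity (‖f ·‖ₑ) t := by
          rw [setLIntegral_congr_fun ht hon, withDensity_apply _ ht]
      _ ≤ ε / 2 + ε / 2 := add_le_add hi (hft i)
      _ = ε := ENNReal.add_halves ε
  exact ⟨φ, hφ, (hν.lintegral_le_liminf _).trans (liminf_le_of_frequently_le' hφ.frequently)⟩

lemma integrable [l.NeBot] [IsFiniteMeasure m] (hν : SetwiseTendsto ν l m) {f : Ω → E}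
    (hf : StronglyMeasurable f)
    (hfuac : UnifAbsCont m fun i => (ν i).withDensity (‖f ·‖ₑ)) : Integrable f m := by
  obtain ⟨φ, -, hφ⟩ := hν.exists_simpleFunc_lintegral_edist_le hf hfuac one_pos
  have hsub : Integrable (f - ⇑φ) m := by
    refine ⟨(hf.sub φ.stronglyMeasurable).aestronglyMeasurable, ?_⟩
    simp only [HasFiniteIntegral, Pi.sub_apply, ← edist_eq_enorm_sub]
    exact hφ.trans_lt ENNReal.one_lt_top
  simpa only [sub_add_cancel] using hsub.add φ.integrable_of_isFiniteMeasure

lemma tendsto_integral [NormedSpace ℝ E] [CompleteSpace E] [IsFiniteMeasure m]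
    [∀ i, IsFiniteMeasure (ν i)] (hν : SetwiseTendsto ν l m) {f : Ω → E}
    (hf : StronglyMeasurable f) (hfint : ∀ i, Integrable f (ν i))
    (hfuac : UnifAbsCont m fun i => (ν i).withDensity (‖f ·‖ₑ)) :
    Tendsto (fun i => ∫ x, f x ∂(ν i)) l (𝓝 (∫ x, f x ∂m)) := by
  rcases l.eq_or_neBot with rfl | _
  · exact tendsto_bot
  have hfm := hν.integrable hf hfuac
  rw [tendsto_iff_edist_tendsto_0, ENNReal.tendsto_nhds_zero]
  intro ε hε
  have hε3 : 0 < ε / 3 := ENNReal.div_pos hε.ne' (by finiteness)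
  obtain ⟨φ, hφν, hφm⟩ := hν.exists_simpleFunc_lintegral_edist_le hf hfuac hε3
  have hφ := ENNReal.tendsto_nhds_zero.1
    (tendsto_iff_edist_tendsto_0.1 (hν.tendsto_integral_simpleFunc φ)) _ hε3
  filter_upwards [hφν, hφ] with i hi hφi
  have hνi : edist (∫ x, f x ∂(ν i)) (∫ x, φ x ∂(ν i)) ≤ ε / 3 :=
    (edist_integral_le_lintegral_edist (hfint i) φ.integrable_of_isFiniteMeasure).trans hi
  have hm : edist (∫ x, φ x ∂m) (∫ x, f x ∂m) ≤ ε / 3 := by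
    rw [edist_comm]
    exact (edist_integral_le_lintegral_edist hfm φ.integrable_of_isFiniteMeasure).trans hφm
  calc edist (∫ x, f x ∂(ν i)) (∫ x, f x ∂m)
      ≤ edist (∫ x, f x ∂(ν i)) (∫ x, φ x ∂(ν i)) + edist (∫ x, φ x ∂(ν i)) (∫ x, φ x ∂m) +
          edist (∫ x, φ x ∂m) (∫ x, f x ∂m) := edist_triangle4 _ _ _ _
    _ ≤ ε / 3 + ε / 3 + ε / 3 := add_le_add (add_le_add hνi hφi) hm
    _ = ε := ENNReal.add_thirds ε

section Sequence

variable [SemilatticeSup ι] [Nonempty ι] [Countable ι] {F : ι → Ω → E} {f : Ω → E}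

lemma tendsto_lintegral_edist [IsFiniteMeasure m] (hν : SetwiseTendsto ν atTop m)
    (hF : ∀ i, StronglyMeasurable (F i)) (hf : StronglyMeasurable f)
    (hFf : ∀ᵐ x ∂m, Tendsto (fun i => F i x) atTop (𝓝 (f x)))
    (hFuac : UnifAbsCont m fun i => (ν i).withDensity (‖F i ·‖ₑ))
    (hfuac : UnifAbsCont m fun i => (ν i).withDensity (‖f ·‖ₑ)) :
    Tendsto (fun i => ∫⁻ x, edist (F i x) (f x) ∂(ν i)) atTop (𝓝 0) := by
  rw [ENNReal.tendsto_nhds_zero]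
  intro ε hε
  obtain ⟨c, hc, hcν⟩ := hν.exists_eventually_mul_measure_univ_le (ENNReal.half_pos hε.ne')
  obtain ⟨t, ht, hFft, hunif⟩ := (hFuac.add hfuac).exists_tendstoUniformlyOn_compl hF hf hFf
    (ENNReal.half_pos hε.ne')
  filter_upwards [hcν, EMetric.tendstoUniformlyOn_iff.1 hunif c hc] with i hi hclose
  have hon : ∫⁻ x in t, edist (F i x) (f x) ∂(ν i) ≤ ε / 2 :=
    calc ∫⁻ x in t, edist (F i x) (f x) ∂(ν i)
        ≤ ∫⁻ x in t, ‖F i x‖ₑ + ‖f x‖ₑ ∂(ν i) :=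
          lintegral_mono fun x => (edist_eq_enorm_sub _ _).trans_le enorm_sub_le
      _ = ((ν i).withDensity (‖F i ·‖ₑ) + (ν i).withDensity (‖f ·‖ₑ)) t := by
          rw [lintegral_add_left (hF i).enorm, Measure.add_apply, withDensity_apply _ ht,
            withDensity_apply _ ht]
      _ ≤ ε / 2 := hFft i
  calc ∫⁻ x, edist (F i x) (f x) ∂(ν i)
      ≤ c * ν i Set.univ + ∫⁻ x in t, edist (F i x) (f x) ∂(ν i) :=
        lintegral_le_mul_add_setLIntegral ht fun x hx => by
          rw [edist_comm]
          exact (hclose x hx).le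
    _ ≤ ε / 2 + ε / 2 := add_le_add hi hon
    _ = ε := ENNReal.add_halves ε

lemma tendsto_integral_of_ae_tendsto [NormedSpace ℝ E] [CompleteSpace E] [IsFiniteMeasure m]
    [∀ i, IsFiniteMeasure (ν i)] (hν : SetwiseTendsto ν atTop m)
    (hF : ∀ i, StronglyMeasurable (F i)) (hf : StronglyMeasurable f)
    (hFint : ∀ i, Integrable (F i) (ν i)) (hfint : ∀ i, Integrable f (ν i))
    (hFf : ∀ᵐ x ∂m, Tendsto (fun i => F i x) atTop (𝓝 (f x)))
    (hFuac : UnifAbsCont m fun i => (ν i).withDensity (‖F i ·‖ₑ))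
    (hfuac : UnifAbsCont m fun i => (ν i).withDensity (‖f ·‖ₑ)) :
    Tendsto (fun i => ∫ x, F i x ∂(ν i)) atTop (𝓝 (∫ x, f x ∂m)) := by
  have hlim := (hν.tendsto_lintegral_edist hF hf hFf hFuac hfuac).add
    (tendsto_iff_edist_tendsto_0.1 (hν.tendsto_integral hf hfint hfuac))
  rw [add_zero] at hlim
  rw [tendsto_iff_edist_tendsto_0]
  refine tendsto_of_tendsto_of_tendsto_of_le_of_le tendsto_const_nhds hlim (fun _ => zero_le)
    fun i => (edist_triangle _ (∫ x, f x ∂(ν i)) _).trans ?_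
  gcongr
  exact edist_integral_le_lintegral_edist (hFint i) (hfint i)

lemma tendsto_setIntegral_comp_of_ae_tendsto [NormedAddCommGroup G] [NormedSpace ℝ G]
    [CompleteSpace G] [IsFiniteMeasure m] [∀ i, IsFiniteMeasure (ν i)]
    (hν : SetwiseTendsto ν atTop m)
    (hF : ∀ i, StronglyMeasurable (F i)) (hf : StronglyMeasurable f)
    (hFint : ∀ i, Integrable (F i) (ν i)) (hfint : ∀ i, Integrable f (ν i))
    (hFf : ∀ᵐ x ∂m, Tendsto (fun i => F i x) atTop (𝓝 (f x)))
    (hFuac : UnifAbsCont m fun i => (ν i).withDensity (‖F i ·‖ₑ))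
    (hfuac : UnifAbsCont m fun i => (ν i).withDensity (‖f ·‖ₑ))
    {φ : E → G} (hφ : Continuous φ) (hφ_le : ∀ y, ‖φ y‖ ≤ ‖y‖)
    {A : Set Ω} (hA : MeasurableSet A) :
    Tendsto (fun i => ∫ x in A, φ (F i x) ∂(ν i)) atTop (𝓝 (∫ x in A, φ (f x) ∂m)) := by
  have hcomp_int : ∀ {μ : Measure Ω} {g : Ω → E}, StronglyMeasurable g → Integrable g μ →
      Integrable (fun x => φ (g x)) (μ.restrict A) := fun hg hgint =>
    (hgint.mono (hφ.comp_stronglyMeasurable hg).aestronglyMeasurable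
      (ae_of_all _ fun x => hφ_le _)).restrict
  have hcomp_uac : ∀ {g : ι → Ω → E}, UnifAbsCont m (fun i => (ν i).withDensity (‖g i ·‖ₑ)) →
      UnifAbsCont (m.restrict A) fun i =>
        ((ν i).restrict A).withDensity (fun x => ‖φ (g i x)‖ₑ) := fun hg => by
    simp only [← restrict_withDensity hA]
    exact (hg.mono fun i => withDensity_mono (ae_of_all _ fun x =>
      enorm_le_iff_norm_le.2 (hφ_le _))).restrict hA
  exact (hν.restrict hA).tendsto_integral_of_ae_tendsto
    (fun i => hφ.comp_stronglyMeasurable (hF i)) (hφ.comp_stronglyMeasurable hf)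
    (fun i => hcomp_int (hF i) (hFint i)) (fun i => hcomp_int hf (hfint i))
    ((ae_restrict_of_ae hFf).mono fun x hx => (hφ.tendsto _).comp hx)
    (hcomp_uac hFuac) (hcomp_uac hfuac)

end Sequence

end SetwiseTendsto

lemma abs_integral_sub_measureReal_le {μ : Measure Ω} [IsFiniteMeasure μ] {K A U : Set Ω}
    (hKA : K ⊆ A) (hAU : A ⊆ U) (hK : MeasurableSet K) (hA : MeasurableSet A)
    (hU : MeasurableSet U) {g : Ω → ℝ} (hg : Measurable g) (hgK : Set.EqOn g 1 K)
    (hgU : Set.EqOn g 0 Uᶜ) (hg_mem : ∀ x, g x ∈ Set.Icc 0 1) :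
    |∫ x, g x ∂μ - μ.real A| ≤ μ.real (U \ K) := by
  have hgint : Integrable g μ := .of_mem_Icc 0 1 hg.aemeasurable (ae_of_all _ hg_mem)
  have hindicator : ∀ {s : Set Ω}, MeasurableSet s → Integrable (s.indicator (1 : Ω → ℝ)) μ :=
    fun hs => (integrable_const 1).indicator hs
  have hpointwise : ∀ x, ‖g x - A.indicator 1 x‖ ≤ (U \ K).indicator 1 x := by
    intro x
    by_cases hxK : x ∈ K
    · simp [hgK hxK, hKA hxK, hxK]
    by_cases hxU : x ∈ U
    · have hA01 : A.indicator (1 : Ω → ℝ) x ∈ Set.Icc 0 1 := by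
        by_cases hxA : x ∈ A <;> simp [hxA]
      rw [Set.indicator_of_mem (show x ∈ U \ K from ⟨hxU, hxK⟩), ← dist_eq_norm]
      exact Real.dist_le_of_mem_Icc_01 (hg_mem x) hA01
    · simp [hgU hxU, mt (@hAU x) hxU, hxU]
  rw [← integral_indicator_one hA, ← integral_indicator_one (hU.diff hK),
    ← integral_sub hgint (hindicator hA)]
  exact norm_integral_le_of_norm_le (hindicator (hU.diff hK)) (ae_of_all _ hpointwise)

section Vague

variable [TopologicalSpace Ω] [R1Space Ω] [BorelSpace Ω]

lemma exists_isCompact_subset_isOpen_measure_sdiff_lt (m : Measure Ω) [IsFiniteMeasure m]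
    [m.InnerRegular] {A : Set Ω} (hA : MeasurableSet A) {ε : ℝ≥0∞} (hε : 0 < ε) :
    ∃ K U, K ⊆ A ∧ A ⊆ U ∧ IsCompact K ∧ IsClosed K ∧ IsOpen U ∧ m (U \ K) < ε := by
  obtain ⟨K, hKA, hK, hKc, hmK⟩ :=
    hA.exists_isCompact_isClosed_sdiff_lt (measure_ne_top m A) (ENNReal.half_pos hε.ne').ne'
  obtain ⟨U, hAU, hU, -, hmU⟩ :=
    hA.exists_isOpen_sdiff_lt (measure_ne_top m A) (ENNReal.half_pos hε.ne').ne'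
  refine ⟨K, U, hKA, hAU, hK, hKc, hU, ?_⟩
  calc m (U \ K) ≤ m (U \ A ∪ A \ K) := by
        gcongr
        rw [Set.sdiff_union_sdiff_cancel hAU hKA]
    _ ≤ m (U \ A) + m (A \ K) := measure_union_le _ _
    _ < ε / 2 + ε / 2 := ENNReal.add_lt_add hmU hmK
    _ = ε := ENNReal.add_halves ε

lemma UnifAbsCont.setwiseTendsto_of_vague [LocallyCompactSpace Ω] [IsFiniteMeasure m]
    [m.InnerRegular] [∀ i, IsFiniteMeasure (ν i)] (hν : UnifAbsCont m ν)
    (hvague : ∀ g : Ω → ℝ, Continuous g → HasCompactSupport g →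
      Tendsto (fun i => ∫ x, g x ∂(ν i)) l (𝓝 (∫ x, g x ∂m))) :
    SetwiseTendsto ν l m := by
  intro A hA
  rw [← ENNReal.tendsto_toReal_iff (fun i => measure_ne_top _ _) (measure_ne_top _ _),
    Metric.tendsto_nhds]
  intro ε hε
  obtain ⟨δ, hδ, hνδ⟩ := hν (ε / 3) (by positivity)
  obtain ⟨K, U, hKA, hAU, hK, hKc, hU, hmUK⟩ := exists_isCompact_subset_isOpen_measure_sdiff_lt m hA
    (ENNReal.ofReal_pos.2 (show 0 < min δ (ε / 3) by positivity))
  rw [ENNReal.ofReal_min, lt_min_iff] at hmUK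
  have hνUK := hνδ _ (hU.measurableSet.diff hKc.measurableSet) hmUK.1
  obtain ⟨g, hgK, hgU, hgc, hg_mem⟩ := exists_continuous_one_zero_of_isCompact hK
    hU.isClosed_compl (Set.disjoint_compl_right_iff_subset.2 (hKA.trans hAU))
  have happrox : ∀ (μ : Measure Ω) [IsFiniteMeasure μ], μ (U \ K) < ENNReal.ofReal (ε / 3) →
      |∫ x, g x ∂μ - μ.real A| < ε / 3 := fun μ _ hμ =>
    (abs_integral_sub_measureReal_le hKA hAU hKc.measurableSet hA hU.measurableSet
      g.continuous.measurable hgK hgU hg_mem).trans_lt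
      ((ENNReal.lt_ofReal_iff_toReal_lt (measure_ne_top _ _)).1 hμ)
  filter_upwards [Metric.tendsto_nhds.1 (hvague g g.continuous hgc) (ε / 3) (by positivity)]
    with i hi
  calc dist ((ν i).real A) (m.real A)
      ≤ dist ((ν i).real A) (∫ x, g x ∂(ν i)) + dist (∫ x, g x ∂(ν i)) (∫ x, g x ∂m) +
          dist (∫ x, g x ∂m) (m.real A) := dist_triangle4 _ _ _ _
    _ < ε / 3 + ε / 3 + ε / 3 := by
        gcongr
        · rw [dist_comm]
          exact happrox (ν i) (hνUK i)
        · exact happrox m hmUK.2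
    _ = ε := add_thirds ε

theorem tendsto_setIntegral_posPart_negPart_general [LocallyCompactSpace Ω]
    (m : Measure Ω) (mseq : ℕ → Measure Ω) [IsFiniteMeasure m] [m.InnerRegular]
    [∀ n, IsFiniteMeasure (mseq n)] {f : Ω → ℝ} {fseq : ℕ → Ω → ℝ}
    (hmeas : ∀ n, Measurable (fseq n)) (hf : Measurable f)
    (hfseqint : ∀ n, Integrable (fseq n) (mseq n)) (hfint : ∀ n, Integrable f (mseq n))
    (hae : ∀ᵐ t ∂m, Tendsto (fun n => fseq n t) atTop (𝓝 (f t)))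
    (hfsequac : HasUnifAbsContIntegrals mseq fseq)
    (hfuac : HasUnifAbsContIntegrals mseq fun _ => f)
    (hvague : ∀ g : Ω → ℝ, Continuous g → HasCompactSupport g →
      Tendsto (fun n => ∫ x, g x ∂(mseq n)) atTop (𝓝 (∫ x, g x ∂m)))
    (huac : UnifAbsCont m mseq) {A : Set Ω} (hA : MeasurableSet A) :
    Tendsto (fun n => ∫ x in A, max (fseq n x) 0 ∂(mseq n)) atTop
        (𝓝 (∫ x in A, max (f x) 0 ∂m)) ∧
      Tendsto (fun n => ∫ x in A, max (-(fseq n x)) 0 ∂(mseq n)) atTop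
        (𝓝 (∫ x in A, max (-(f x)) 0 ∂m)) := by
  have hcomp : ∀ φ : ℝ → ℝ, Continuous φ → (∀ y, ‖φ y‖ ≤ ‖y‖) →
      Tendsto (fun n => ∫ x in A, φ (fseq n x) ∂(mseq n)) atTop (𝓝 (∫ x in A, φ (f x) ∂m)) :=
    fun φ hφ hφ_le => (huac.setwiseTendsto_of_vague hvague).tendsto_setIntegral_comp_of_ae_tendsto
      (fun n => (hmeas n).stronglyMeasurable) hf.stronglyMeasurable hfseqint hfint hae
      (hfsequac.unifAbsCont_withDensity huac hfseqint)
      (hfuac.unifAbsCont_withDensity huac hfint) hφ hφ_le hA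
  have hpos : ∀ y : ℝ, ‖max y 0‖ ≤ ‖y‖ := fun y => abs_max_le_max_abs_abs.trans (by simp)
  exact ⟨hcomp (fun y => max y 0) (by fun_prop) hpos,
    hcomp (fun y => max (-y) 0) (by fun_prop) fun y => (hpos (-y)).trans_eq (norm_neg y)⟩

end Vague

end

/-- Under the hypotheses of the main convergence theorem, the positive and negative
parts also converge: `∫_A fₙ⁺ dmₙ → ∫_A f⁺ dm` and `∫_A fₙ⁻ dmₙ → ∫_A f⁻ dm`
for every Borel set `A`. -/
theorem tendsto_setIntegral_posPart_negPart
    {Ω : Type*} [TopologicalSpace Ω] [LocallyCompactSpace Ω] [T2Space Ω]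
    [MeasurableSpace Ω] [BorelSpace Ω]
    (m : Measure Ω) (mseq : ℕ → Measure Ω)
    [IsFiniteMeasure m] (hfin : ∀ n, IsFiniteMeasure (mseq n))
    (hRadon : m.InnerRegular)
    (f : Ω → ℝ) (fseq : ℕ → Ω → ℝ)
    (hmeas : ∀ n, Measurable (fseq n))
    (hfseqint : ∀ n, Integrable (fseq n) (mseq n))
    (hfint : ∀ n, Integrable f (mseq n))
    (hae : ∀ᵐ t ∂m, Tendsto (fun n => fseq n t) atTop (𝓝 (f t)))
    (hf : Continuous f)
    (huacseq : ∀ ε : ℝ, 0 < ε → ∃ δ : ℝ, 0 < δ ∧ ∀ n, ∀ A : Set Ω, MeasurableSet A →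
      mseq n A < ENNReal.ofReal δ → ∫ x in A, |fseq n x| ∂(mseq n) < ε)
    (huacf : ∀ ε : ℝ, 0 < ε → ∃ δ : ℝ, 0 < δ ∧ ∀ n, ∀ A : Set Ω, MeasurableSet A →
      mseq n A < ENNReal.ofReal δ → ∫ x in A, |f x| ∂(mseq n) < ε)
    (hvague : ∀ g : Ω → ℝ, Continuous g → Tendsto g (cocompact Ω) (𝓝 0) →
      Tendsto (fun n => ∫ x, g x ∂(mseq n)) atTop (𝓝 (∫ x, g x ∂m)))
    (huac : ∀ ε : ℝ, 0 < ε → ∃ δ : ℝ, 0 < δ ∧ ∀ E : Set Ω, MeasurableSet E →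
      m E < ENNReal.ofReal δ → ∀ n, mseq n E < ENNReal.ofReal ε) :
    ∀ A : Set Ω, MeasurableSet A →
      Tendsto (fun n => ∫ x in A, max (fseq n x) 0 ∂(mseq n)) atTop
        (𝓝 (∫ x in A, max (f x) 0 ∂m)) ∧
      Tendsto (fun n => ∫ x in A, max (-(fseq n x)) 0 ∂(mseq n)) atTop
        (𝓝 (∫ x in A, max (-(f x)) 0 ∂m)) := by
  intro A hA
  exact tendsto_setIntegral_posPart_negPart_general m mseq hmeas hf.measurable hfseqint hfint hae
    huacseq huacf (fun g hg hgc => hvague g hg hgc.is_zero_at_infty) huac hA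
end
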